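/- arXiv:0710.4324 — 8 statements merged into one kernel-verified Lean document; each statement's English description precedes it below -/
import Mathlib

section
/- Let n > 1 be a real number and let β be any real number with β < ((n−1)/n)^{n−1}. Then the supremum, over all nonnegative u ∈ C¹([0,∞)) with u(0) = 0 and ∫₀^∞ |u'(r)|ⁿ dr < ∞, of the quantity ln(∫₀^∞ e^{n(u(r)−r)} dr) − β · ∫₀^∞ |u'(r)|ⁿ dr is +∞. In other words, for no constant C does the inequality ln(∫₀^∞ e^{n(u−r)} dr) ≤ β ∫₀^∞ |u'|ⁿ dr + C hold for all such u; hence the coefficient ((n−1)/n)^{n−1} is optimal. -/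
open MeasureTheory Real Set

/-!
Write `σ` for the sigmoid function and `q = n / (n - 1)` for the exponent conjugate to `n`. Test the
inequality on `u r = log (σ (q r - t)) - log (σ (-t))`, which climbs from `0` to
`L = -log (σ (-t)) > t` with slope between `0` and `q`. The slope bound gives
`∫ |u'| ^ n ≤ q ^ (n - 1) ∫ u' = q ^ (n - 1) L`, whereas `∫ exp (n (u - r))` is elementary and has
logarithm exactly `L - log n`. Since `((n - 1) / n) ^ (n - 1)` is the inverse of `q ^ (n - 1)`, for
`β` below it the functional grows at least linearly in `L`, hence in `t`.
-/

section BoundedRpow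

variable {α : Type*} [MeasurableSpace α] {μ : Measure α} {f : α → ℝ} {M s : ℝ}

theorem rpow_le_rpow_sub_one_mul_self {x : ℝ} (hx : 0 ≤ x) (hxM : x ≤ M) (hs : 1 ≤ s) :
    x ^ s ≤ M ^ (s - 1) * x := by
  have hsplit : x ^ s = x ^ (s - 1) * x := by
    rw [← rpow_add_one' hx (by linarith), sub_add_cancel]
  rw [hsplit]
  gcongr

theorem integrable_abs_rpow_of_ae_abs_le (hf : Integrable f μ) (hM : ∀ᵐ x ∂μ, |f x| ≤ M)
    (hs : 1 ≤ s) : Integrable (fun x ↦ |f x| ^ s) μ := by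
  refine (hf.abs.const_mul (M ^ (s - 1))).mono'
    (hf.abs.aemeasurable.pow_const s).aestronglyMeasurable ?_
  filter_upwards [hM] with x hx
  rw [norm_of_nonneg (by positivity)]
  exact rpow_le_rpow_sub_one_mul_self (abs_nonneg _) hx hs

theorem integral_abs_rpow_le (hf : Integrable f μ) (hM : ∀ᵐ x ∂μ, |f x| ≤ M) (hs : 1 ≤ s) :
    ∫ x, |f x| ^ s ∂μ ≤ M ^ (s - 1) * ∫ x, |f x| ∂μ := by
  rw [← integral_const_mul]
  refine integral_mono_ae (integrable_abs_rpow_of_ae_abs_le hf hM hs) (hf.abs.const_mul _) ?_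
  filter_upwards [hM] with x hx
  exact rpow_le_rpow_sub_one_mul_self (abs_nonneg _) hx hs

end BoundedRpow

section Sigmoid

theorem log_sigmoid_lt_self (x : ℝ) : log (sigmoid x) < x := by
  rw [log_lt_iff_lt_exp (sigmoid_pos x)]
  calc sigmoid x = sigmoid (-x) * exp x := by simpa using (sigmoid_mul_rexp_neg (-x)).symm
    _ < exp x := mul_lt_of_lt_one_left (exp_pos x) (sigmoid_lt_one _)

theorem hasDerivAt_log_sigmoid (x : ℝ) :
    HasDerivAt (fun y ↦ log (sigmoid y)) (sigmoid (-x)) x := by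
  refine ((hasDerivAt_sigmoid x).log (sigmoid_pos x).ne').congr_deriv ?_
  rw [mul_div_cancel_left₀ _ (sigmoid_pos x).ne', sigmoid_neg]

theorem hasDerivAt_sigmoid_neg_rpow (s x : ℝ) :
    HasDerivAt (fun y ↦ sigmoid (-y) ^ s) (-(s * (sigmoid x * sigmoid (-x) ^ s))) x := by
  have hneg : HasDerivAt (fun y ↦ sigmoid (-y)) (-(sigmoid x * sigmoid (-x))) x := by
    refine ((hasDerivAt_sigmoid (-x)).comp x (hasDerivAt_neg x)).congr_deriv ?_
    rw [← sigmoid_neg, neg_neg]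
    ring
  refine (hneg.rpow_const (p := s) (Or.inl (sigmoid_pos _).ne')).congr_deriv ?_
  rw [rpow_sub_one (sigmoid_pos _).ne']
  field [(sigmoid_pos (-x)).ne']

theorem hasDerivAt_mul_sub (q t r : ℝ) : HasDerivAt (fun r ↦ q * r - t) q r := by
  simpa using ((hasDerivAt_id r).const_mul q).sub_const t

theorem tendsto_mul_sub_atTop {q : ℝ} (hq : 0 < q) (t : ℝ) :
    Filter.Tendsto (fun r ↦ q * r - t) Filter.atTop Filter.atTop :=
  Filter.tendsto_atTop_add_const_right _ _ (Filter.tendsto_id.const_mul_atTop hq)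

variable {q s : ℝ}

theorem hasDerivAt_sigmoid_neg_affine_rpow (hq : q ≠ 0) (hs : s ≠ 0) (t r : ℝ) :
    HasDerivAt (fun r ↦ -(sigmoid (-(q * r - t)) ^ s / (q * s)))
      (sigmoid (q * r - t) * sigmoid (-(q * r - t)) ^ s) r := by
  refine (((hasDerivAt_sigmoid_neg_rpow s (q * r - t)).comp r
    (hasDerivAt_mul_sub q t r)).div_const (q * s)).neg.congr_deriv ?_
  field

theorem tendsto_sigmoid_neg_affine_rpow (hq : 0 < q) (hs : 0 < s) (t : ℝ) :
    Filter.Tendsto (fun r ↦ -(sigmoid (-(q * r - t)) ^ s / (q * s))) Filter.atTop (nhds 0) := by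
  have hσ := tendsto_sigmoid_atBot.comp
    (Filter.tendsto_neg_atTop_atBot.comp (tendsto_mul_sub_atTop hq t))
  simpa [hs.ne'] using ((hσ.rpow_const (Or.inr hs.le)).div_const (q * s)).neg

theorem integrableOn_Ioi_sigmoid_mul_sigmoid_neg_rpow (hq : 0 < q) (hs : 0 < s) (t a : ℝ) :
    IntegrableOn (fun r ↦ sigmoid (q * r - t) * sigmoid (-(q * r - t)) ^ s) (Ioi a) :=
  integrableOn_Ioi_deriv_of_nonneg'
    (fun r _ ↦ hasDerivAt_sigmoid_neg_affine_rpow hq.ne' hs.ne' t r)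
    (fun _ _ ↦ mul_nonneg (sigmoid_nonneg _) (rpow_nonneg (sigmoid_nonneg _) _))
    (tendsto_sigmoid_neg_affine_rpow hq hs t)

theorem integral_Ioi_sigmoid_mul_sigmoid_neg_rpow (hq : 0 < q) (hs : 0 < s) (t a : ℝ) :
    ∫ r in Ioi a, sigmoid (q * r - t) * sigmoid (-(q * r - t)) ^ s =
      sigmoid (-(q * a - t)) ^ s / (q * s) := by
  rw [integral_Ioi_of_hasDerivAt_of_nonneg'
    (fun r _ ↦ hasDerivAt_sigmoid_neg_affine_rpow hq.ne' hs.ne' t r)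
    (fun _ _ ↦ mul_nonneg (sigmoid_nonneg _) (rpow_nonneg (sigmoid_nonneg _) _))
    (tendsto_sigmoid_neg_affine_rpow hq hs t), zero_sub, neg_neg]

end Sigmoid

/-- The blow-up family: `blowUpProfile q t r = log ((l + 1) / (l + exp (-q * r)))` with
`l = exp (-t)`, so that `λ₀ = l → 0⁺` corresponds to `t → ∞`. Writing it through the sigmoid
function makes its derivative and its exponential elementary. -/
noncomputable def blowUpProfile (q t r : ℝ) : ℝ :=
  log (sigmoid (q * r - t)) - log (sigmoid (-t))

namespace blowUpProfile

variable {q n : ℝ}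

theorem zero_right (q t : ℝ) : blowUpProfile q t 0 = 0 := by
  simp [blowUpProfile]

theorem nonneg (hq : 0 ≤ q) (t : ℝ) {r : ℝ} (hr : 0 ≤ r) : 0 ≤ blowUpProfile q t r := by
  refine sub_nonneg.2 (log_le_log (sigmoid_pos _) (sigmoid_le ?_))
  linarith [mul_nonneg hq hr]

theorem hasDerivAt (q t r : ℝ) :
    HasDerivAt (blowUpProfile q t) (q * sigmoid (-(q * r - t))) r :=
  (((hasDerivAt_log_sigmoid (q * r - t)).comp r
    (hasDerivAt_mul_sub q t r)).sub_const (log (sigmoid (-t)))).congr_deriv (mul_comm _ _)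

theorem tendsto_atTop (hq : 0 < q) (t : ℝ) :
    Filter.Tendsto (blowUpProfile q t) Filter.atTop (nhds (-log (sigmoid (-t)))) := by
  have hσ := tendsto_sigmoid_atTop.comp (tendsto_mul_sub_atTop hq t)
  simpa using! (hσ.log one_ne_zero).sub_const (log (sigmoid (-t)))

theorem deriv_nonneg (hq : 0 ≤ q) (t r : ℝ) : 0 ≤ q * sigmoid (-(q * r - t)) :=
  mul_nonneg hq (sigmoid_nonneg _)

theorem abs_deriv_le (hq : 0 ≤ q) (t r : ℝ) : |q * sigmoid (-(q * r - t))| ≤ q := by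
  rw [abs_of_nonneg (deriv_nonneg hq t r)]
  exact mul_le_of_le_one_right hq (sigmoid_le_one _)

theorem integrableOn_deriv (hq : 0 < q) (t : ℝ) :
    IntegrableOn (fun r ↦ q * sigmoid (-(q * r - t))) (Ioi 0) :=
  integrableOn_Ioi_deriv_of_nonneg' (fun r _ ↦ hasDerivAt q t r)
    (fun r _ ↦ deriv_nonneg hq.le t r) (tendsto_atTop hq t)

theorem integral_abs_deriv (hq : 0 < q) (t : ℝ) :
    ∫ r in Ioi (0 : ℝ), |q * sigmoid (-(q * r - t))| = -log (sigmoid (-t)) := by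
  simp only [abs_of_nonneg (deriv_nonneg hq.le t _)]
  rw [integral_Ioi_of_hasDerivAt_of_nonneg' (fun r _ ↦ hasDerivAt q t r)
    (fun r _ ↦ deriv_nonneg hq.le t r) (tendsto_atTop hq t), zero_right, sub_zero]

theorem integrableOn_abs_deriv_rpow (hq : 0 < q) (hn : 1 ≤ n) (t : ℝ) :
    IntegrableOn (fun r ↦ |q * sigmoid (-(q * r - t))| ^ n) (Ioi 0) :=
  integrable_abs_rpow_of_ae_abs_le (integrableOn_deriv hq t)
    (.of_forall (abs_deriv_le hq.le t)) hn

theorem integral_abs_deriv_rpow_le (hq : 0 < q) (hn : 1 ≤ n) (t : ℝ) :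
    ∫ r in Ioi (0 : ℝ), |q * sigmoid (-(q * r - t))| ^ n ≤
      q ^ (n - 1) * -log (sigmoid (-t)) := by
  rw [← integral_abs_deriv hq t]
  exact integral_abs_rpow_le (integrableOn_deriv hq t) (.of_forall (abs_deriv_le hq.le t)) hn

theorem exp_eq (q t r : ℝ) :
    exp (blowUpProfile q t r) = sigmoid (q * r - t) / sigmoid (-t) := by
  rw [blowUpProfile, exp_sub, exp_log (sigmoid_pos _), exp_log (sigmoid_pos _)]

theorem exp_sub_mul_eq (q t r : ℝ) :
    exp (blowUpProfile q t r - q * r) = sigmoid (-(q * r - t)) / sigmoid t := by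
  have hexp : exp (-(q * r)) = exp (-(q * r - t)) * exp (-t) := by
    rw [← exp_add]
    ring_nf
  rw [sub_eq_add_neg, exp_add, exp_eq, hexp, ← sigmoid_mul_rexp_neg t,
    ← sigmoid_mul_rexp_neg (q * r - t)]
  field

theorem exp_mul_sub_self_eq (h : n.HolderConjugate q) (t r : ℝ) :
    exp (n * (blowUpProfile q t r - r)) =
      (sigmoid (-t) * sigmoid t ^ (n - 1))⁻¹ *
        (sigmoid (q * r - t) * sigmoid (-(q * r - t)) ^ (n - 1)) := by
  have hsplit : n * (blowUpProfile q t r - r) =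
      blowUpProfile q t r + (blowUpProfile q t r - q * r) * (n - 1) := by
    linear_combination r * h.sub_one_mul_conj
  rw [hsplit, exp_add, exp_mul, exp_eq, exp_sub_mul_eq,
    div_rpow (sigmoid_nonneg _) (sigmoid_nonneg _)]
  field

theorem integrableOn_exp_mul_sub_self (h : n.HolderConjugate q) (t : ℝ) :
    IntegrableOn (fun r ↦ exp (n * (blowUpProfile q t r - r))) (Ioi 0) := by
  simp only [exp_mul_sub_self_eq h]
  exact (integrableOn_Ioi_sigmoid_mul_sigmoid_neg_rpow h.symm.pos h.sub_one_pos t 0).const_mul _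

theorem integral_exp_mul_sub_self (h : n.HolderConjugate q) (t : ℝ) :
    ∫ r in Ioi (0 : ℝ), exp (n * (blowUpProfile q t r - r)) = (n * sigmoid (-t))⁻¹ := by
  have hσt : sigmoid t ^ (n - 1) ≠ 0 := (rpow_pos_of_pos (sigmoid_pos t) _).ne'
  simp only [exp_mul_sub_self_eq h]
  rw [integral_const_mul,
    integral_Ioi_sigmoid_mul_sigmoid_neg_rpow h.symm.pos h.sub_one_pos t 0,
    mul_comm q (n - 1), h.sub_one_mul_conj, mul_zero, zero_sub, neg_neg]
  field

theorem log_integral_exp_mul_sub_self (h : n.HolderConjugate q) (t : ℝ) :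
    log (∫ r in Ioi (0 : ℝ), exp (n * (blowUpProfile q t r - r))) =
      -log (sigmoid (-t)) - log n := by
  rw [integral_exp_mul_sub_self h, log_inv, log_mul h.ne_zero (sigmoid_pos _).ne']
  ring

theorem le_log_integral_sub_mul_integral (h : n.HolderConjugate q) (β t : ℝ) :
    (1 - max β 0 * q ^ (n - 1)) * -log (sigmoid (-t)) - log n ≤
      log (∫ r in Ioi (0 : ℝ), exp (n * (blowUpProfile q t r - r))) -
        β * ∫ r in Ioi (0 : ℝ), |q * sigmoid (-(q * r - t))| ^ n := by
  have henergy : β * ∫ r in Ioi (0 : ℝ), |q * sigmoid (-(q * r - t))| ^ n ≤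
      max β 0 * (q ^ (n - 1) * -log (sigmoid (-t))) :=
    mul_le_mul (le_max_left _ _) (integral_abs_deriv_rpow_le h.symm.pos h.lt.le t)
      (integral_nonneg fun _ ↦ by positivity) (le_max_right _ _)
  rw [log_integral_exp_mul_sub_self h]
  linarith

end blowUpProfile

theorem max_mul_conjugate_rpow_lt_one {n q β : ℝ} (h : n.HolderConjugate q)
    (hβ : β < ((n - 1) / n) ^ (n - 1)) : max β 0 * q ^ (n - 1) < 1 := by
  have hratio : 0 < (n - 1) / n := div_pos h.sub_one_pos h.pos
  have hinv : (n - 1) / n = q⁻¹ := by rw [h.conjugate_eq, inv_div]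
  have hcoef : max β 0 < (q ^ (n - 1))⁻¹ := by
    rw [← inv_rpow h.symm.nonneg, ← hinv]
    exact max_lt hβ (rpow_pos_of_pos hratio _)
  rwa [← one_div, lt_div_iff₀ (rpow_pos_of_pos h.symm.pos _)] at hcoef

/-- **Optimality of the coefficient `((n-1)/n)^{n-1}`** (Li–Zhu, Theorem 1, sharpness).
For real `n > 1` and any `β < ((n-1)/n)^{n-1}`, no constant `C` makes the inequality
`ln ∫₀^∞ e^{n(u-r)} dr ≤ β ∫₀^∞ |u'|ⁿ dr + C` hold over all nonnegative `C¹`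
functions `u` on `[0,∞)` with `u 0 = 0` and `∫₀^∞ |u'|ⁿ < ∞`: the supremum of
`ln ∫₀^∞ e^{n(u-r)} dr - β ∫₀^∞ |u'|ⁿ dr` over this class is `+∞`. -/
theorem coefficient_optimal (n β : ℝ) (hn : 1 < n)
    (hβ : β < ((n - 1) / n) ^ (n - 1)) (C : ℝ) :
    ∃ u u' : ℝ → ℝ,
      (∀ r ∈ Set.Ici (0 : ℝ), HasDerivWithinAt u (u' r) (Set.Ici 0) r) ∧
      ContinuousOn u' (Set.Ici 0) ∧
      (∀ r ∈ Set.Ici (0 : ℝ), 0 ≤ u r) ∧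
      u 0 = 0 ∧
      IntegrableOn (fun r => |u' r| ^ n) (Set.Ioi 0) ∧
      IntegrableOn (fun r => Real.exp (n * (u r - r))) (Set.Ioi 0) ∧
      C < Real.log (∫ r in Set.Ioi (0 : ℝ), Real.exp (n * (u r - r))) -
            β * ∫ r in Set.Ioi (0 : ℝ), |u' r| ^ n := by
  obtain ⟨q, h⟩ : ∃ q, n.HolderConjugate q := ⟨_, .conjExponent hn⟩
  have hδ : 0 < 1 - max β 0 * q ^ (n - 1) := sub_pos.2 (max_mul_conjugate_rpow_lt_one h hβ)
  obtain ⟨t, ht⟩ : ∃ t, C + log n = (1 - max β 0 * q ^ (n - 1)) * t :=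
    ⟨_, (mul_div_cancel₀ _ hδ.ne').symm⟩
  refine ⟨blowUpProfile q t, fun r ↦ q * sigmoid (-(q * r - t)),
    fun r _ ↦ (blowUpProfile.hasDerivAt q t r).hasDerivWithinAt, by fun_prop,
    fun r hr ↦ blowUpProfile.nonneg h.symm.nonneg t hr, blowUpProfile.zero_right q t,
    blowUpProfile.integrableOn_abs_deriv_rpow h.symm.pos hn.le t,
    blowUpProfile.integrableOn_exp_mul_sub_self h t, ?_⟩
  calc C = (1 - max β 0 * q ^ (n - 1)) * t - log n := by linarith
    _ < (1 - max β 0 * q ^ (n - 1)) * -log (sigmoid (-t)) - log n := by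
      gcongr
      exact lt_neg_of_lt_neg (log_sigmoid_lt_self (-t))
    _ ≤ _ := blowUpProfile.le_log_integral_sub_mul_integral h β t
end

section
/- Let n > 1 be a real number and let β₀ > ((n−1)/n)^{(n−1)/n}. Then there is a constant c₁(β₀) (depending only on n and β₀) such that for every u ∈ C¹([0,∞)) with u(0) = 0 and ∫₀^∞ |u'(r)|ⁿ dr < ∞, one has ln(∫₀^∞ e^{n(u(r)−r)} dr) ≤ β₀ⁿ · ∫₀^∞ |u'(r)|ⁿ dr + c₁(β₀). In fact one may take c₁(β₀) = ln(1/(n − (n−1)β₀^{−n/(n−1)})). -/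
open MeasureTheory Real Set

/-!
With `q = n / (n - 1)`, Young's inequality applied to the product `(β₀ u') · β₀⁻¹` gives
`n u' ≤ β₀ⁿ |u'|ⁿ + (n - 1) β₀^{-q}`. Integrating, `n u(r)` grows at most linearly, with slope
`(n - 1) β₀^{-q}`. The condition on `β₀` says exactly that this slope is less than `n`, so
`e^{n (u(r) - r)}` is dominated by a decaying exponential whose integral is explicit.
-/

section Young

variable {p q β : ℝ}

lemma mul_le_rpow_mul_rpow_abs_add (hpq : p.HolderConjugate q) (hβ : 0 < β) (x : ℝ) :
    p * x ≤ β ^ p * |x| ^ p + (p - 1) * β ^ (-q) := by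
  have young : |x| ≤ (β * |x|) ^ p / p + β⁻¹ ^ q / q := by
    have h := young_inequality_of_nonneg (by positivity : 0 ≤ β * |x|) (inv_nonneg.2 hβ.le) hpq
    rwa [mul_right_comm, mul_inv_cancel₀ hβ.ne', one_mul] at h
  calc p * x ≤ p * ((β * |x|) ^ p / p + β⁻¹ ^ q / q) :=
        mul_le_mul_of_nonneg_left ((le_abs_self x).trans young) hpq.nonneg
    _ = (β * |x|) ^ p + p / q * β⁻¹ ^ q := by
        have := hpq.ne_zero
        field_simp
    _ = β ^ p * |x| ^ p + (p - 1) * β ^ (-q) := by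
        rw [hpq.div_conj_eq_sub_one, mul_rpow hβ.le (abs_nonneg x), inv_rpow hβ.le,
          rpow_neg hβ.le]

lemma rpow_neg_lt_of_inv_rpow_inv_lt (hq : 0 < q) (hβ : q⁻¹ ^ q⁻¹ < β) : β ^ (-q) < q := by
  have hβ_pos : 0 < β := (rpow_pos_of_pos (inv_pos.2 hq) _).trans hβ
  rw [rpow_neg hβ_pos.le]
  exact inv_lt_of_inv_lt₀ hq
    ((rpow_inv_lt_iff_of_pos (inv_nonneg.2 hq.le) hβ_pos.le hq).1 hβ)

lemma sub_one_mul_rpow_neg_lt (hpq : p.HolderConjugate q) (hβ : q⁻¹ ^ q⁻¹ < β) :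
    (p - 1) * β ^ (-q) < p :=
  calc (p - 1) * β ^ (-q) < (p - 1) * q :=
        mul_lt_mul_of_pos_left (rpow_neg_lt_of_inv_rpow_inv_lt hpq.symm.pos hβ) hpq.sub_one_pos
    _ = p := hpq.sub_one_mul_conj

lemma integrable_norm_rpow_of_memLp {α E : Type*} {_ : MeasurableSpace α} {μ : Measure α}
    [NormedAddCommGroup E] {f : α → E} (hp : 0 < p) (hf : MemLp f (ENNReal.ofReal p) μ) :
    Integrable (fun x => ‖f x‖ ^ p) μ := by
  simpa only [ENNReal.toReal_ofReal hp.le] using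
    hf.integrable_norm_rpow (ENNReal.ofReal_pos.2 hp).ne' ENNReal.ofReal_ne_top

lemma mul_integral_le_rpow_mul_integral_rpow_abs_add {α : Type*} {_ : MeasurableSpace α}
    {μ : Measure α} [IsFiniteMeasure μ] {f : α → ℝ} (hpq : p.HolderConjugate q) (hβ : 0 < β)
    (hf : MemLp f (ENNReal.ofReal p) μ) :
    p * ∫ x, f x ∂μ ≤ β ^ p * (∫ x, |f x| ^ p ∂μ) + (p - 1) * β ^ (-q) * μ.real univ := by
  have hf_int : Integrable f μ := hf.integrable (ENNReal.one_le_ofReal.2 hpq.lt.le)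
  have hf_rpow : Integrable (fun x => |f x| ^ p) μ := integrable_norm_rpow_of_memLp hpq.pos hf
  calc p * ∫ x, f x ∂μ = ∫ x, p * f x ∂μ := (integral_const_mul p f).symm
    _ ≤ ∫ x, (β ^ p * |f x| ^ p + (p - 1) * β ^ (-q)) ∂μ :=
        integral_mono (hf_int.const_mul p) ((hf_rpow.const_mul _).add (integrable_const _))
          fun x => mul_le_rpow_mul_rpow_abs_add hpq hβ (f x)
    _ = β ^ p * (∫ x, |f x| ^ p ∂μ) + (p - 1) * β ^ (-q) * μ.real univ := by
        rw [integral_add (hf_rpow.const_mul _) (integrable_const _), integral_const_mul,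
          integral_const, smul_eq_mul, mul_comm (μ.real univ)]

end Young

section HalfLine

variable {E : Type*} [NormedAddCommGroup E] {a b : ℝ}

lemma intervalIntegrable_of_memLp_Ioi {p : ENNReal} {f : ℝ → E} (hp : 1 ≤ p)
    (hf : MemLp f p (volume.restrict (Ioi a))) (hab : a ≤ b) :
    IntervalIntegrable f volume a b :=
  (intervalIntegrable_iff_integrableOn_Ioc_of_le hab).2 <|
    (hf.mono_measure (Measure.restrict_mono_set volume Ioc_subset_Ioi_self)).integrable hp

lemma continuousOn_Ici_primitive [NormedSpace ℝ E] {μ : Measure ℝ} [NullSingletonClass μ]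
    {f : ℝ → E} (hf : ∀ b, a ≤ b → IntervalIntegrable f μ a b) :
    ContinuousOn (fun b => ∫ x in a..b, f x ∂μ) (Ici a) := by
  intro b (hb : a ≤ b)
  have hb' : a ≤ b + 1 := by linarith
  have hcont := intervalIntegral.continuousOn_primitive_interval' (hf _ hb') left_mem_uIcc
  rw [uIcc_of_le hb'] at hcont
  refine (hcont b ⟨hb, by linarith⟩).mono_of_mem_nhdsWithin ?_
  rw [← Ici_inter_Iic]
  exact Filter.inter_mem self_mem_nhdsWithin
    (mem_nhdsWithin_of_mem_nhds (Iic_mem_nhds (lt_add_one b)))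

lemma memLp_of_hasDerivWithinAt_Ici [NormedSpace ℝ E] [CompleteSpace E] {u u' : ℝ → E} {p : ℝ}
    (hp : 0 < p) (hderiv : ∀ r ∈ Ici a, HasDerivWithinAt u (u' r) (Ici a) r)
    (hint : IntegrableOn (fun r => ‖u' r‖ ^ p) (Ioi a)) :
    MemLp u' (ENNReal.ofReal p) (volume.restrict (Ioi a)) := by
  have hderiv_eq : deriv u =ᵐ[volume.restrict (Ioi a)] u' :=
    ae_restrict_of_forall_mem measurableSet_Ioi fun r hr =>
      ((hderiv r (Ioi_subset_Ici_self hr)).hasDerivAt (Ici_mem_nhds hr)).deriv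
  have hmeas : AEStronglyMeasurable u' (volume.restrict (Ioi a)) :=
    (aestronglyMeasurable_deriv u _).congr hderiv_eq
  refine (integrable_norm_rpow_iff hmeas (by simpa using hp) ENNReal.ofReal_ne_top).1 ?_
  rwa [ENNReal.toReal_ofReal hp.le]

lemma integral_eq_sub_of_hasDerivWithinAt_Ici [NormedSpace ℝ E] [CompleteSpace E]
    {u u' : ℝ → E} (hderiv : ∀ r ∈ Ici a, HasDerivWithinAt u (u' r) (Ici a) r) (hab : a ≤ b)
    (hint : IntervalIntegrable u' volume a b) :
    ∫ x in a..b, u' x = u b - u a :=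
  intervalIntegral.integral_eq_sub_of_hasDerivAt_of_le hab
    (fun r hr => (hderiv r hr.1).continuousWithinAt.mono Icc_subset_Ici_self)
    (fun r hr => (hderiv r hr.1.le).hasDerivAt (Ici_mem_nhds hr.1)) hint

lemma mul_primitive_le_of_memLp_Ioi {p q β : ℝ} {f : ℝ → ℝ} (hpq : p.HolderConjugate q)
    (hβ : 0 < β) (hf : MemLp f (ENNReal.ofReal p) (volume.restrict (Ioi a))) (hab : a ≤ b) :
    p * ∫ x in a..b, f x ≤
      β ^ p * (∫ x in Ioi a, |f x| ^ p) + (p - 1) * β ^ (-q) * (b - a) := by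
  have hf_rpow : IntegrableOn (fun x => |f x| ^ p) (Ioi a) :=
    integrable_norm_rpow_of_memLp hpq.pos hf
  have hmono : ∫ x in Ioc a b, |f x| ^ p ≤ ∫ x in Ioi a, |f x| ^ p :=
    setIntegral_mono_set hf_rpow (ae_of_all _ fun x => by positivity)
      Ioc_subset_Ioi_self.eventuallyLE
  have hyoung := mul_integral_le_rpow_mul_integral_rpow_abs_add hpq hβ
    (hf.mono_measure (Measure.restrict_mono_set volume (Ioc_subset_Ioi_self : Ioc a b ⊆ Ioi a)))
  rw [measureReal_restrict_apply_univ, volume_real_Ioc_of_le hab] at hyoung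
  rw [intervalIntegral.integral_of_le hab]
  exact hyoung.trans (by gcongr)

end HalfLine

section ExpDecay

variable {f : ℝ → ℝ} {a C D : ℝ}

lemma integrableOn_Ioi_exp_sub_mul (C : ℝ) (hD : 0 < D) :
    IntegrableOn (fun r => exp (C - D * (r - a))) (Ioi a) :=
  ((exp_neg_integrableOn_Ioi a hD).const_mul (exp (C + D * a))).congr <|
    ae_of_all _ fun r => by
      dsimp only
      rw [← exp_add]
      ring_nf

lemma integral_Ioi_exp_sub_mul (C : ℝ) (hD : 0 < D) :
    ∫ r in Ioi a, exp (C - D * (r - a)) = exp C * (1 / D) := by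
  calc ∫ r in Ioi a, exp (C - D * (r - a)) = ∫ r in Ioi a, exp (C + D * a) * exp (-D * r) := by
        congr with r
        rw [← exp_add]
        ring_nf
    _ = exp (C + D * a) * exp (-D * a) * (1 / D) := by
        rw [integral_const_mul, integral_exp_mul_Ioi (neg_neg_of_pos hD), neg_div_neg_eq]
        ring
    _ = exp C * (1 / D) := by
        rw [← exp_add]
        ring_nf

lemma integrableOn_Ioi_exp_of_le_sub_mul (hD : 0 < D)
    (hf : AEStronglyMeasurable f (volume.restrict (Ioi a)))
    (hle : ∀ᵐ r ∂volume.restrict (Ioi a), f r ≤ C - D * (r - a)) :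
    IntegrableOn (fun r => exp (f r)) (Ioi a) := by
  refine (integrableOn_Ioi_exp_sub_mul C hD).mono'
    (continuous_exp.comp_aestronglyMeasurable hf) ?_
  filter_upwards [hle] with r hr
  rw [norm_of_nonneg (exp_nonneg _)]
  exact exp_le_exp.2 hr

lemma log_integral_Ioi_exp_le_of_le_sub_mul (hD : 0 < D)
    (hf : AEStronglyMeasurable f (volume.restrict (Ioi a)))
    (hle : ∀ᵐ r ∂volume.restrict (Ioi a), f r ≤ C - D * (r - a)) :
    log (∫ r in Ioi a, exp (f r)) ≤ C + log (1 / D) := by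
  have hint := integrableOn_Ioi_exp_of_le_sub_mul hD hf hle
  have : NeZero (volume.restrict (Ioi a)) := ⟨by simp⟩
  calc log (∫ r in Ioi a, exp (f r)) ≤ log (∫ r in Ioi a, exp (C - D * (r - a))) := by
        refine log_le_log (integral_exp_pos hint)
          (integral_mono_ae hint (integrableOn_Ioi_exp_sub_mul C hD) ?_)
        filter_upwards [hle] with r hr using exp_le_exp.2 hr
    _ = C + log (1 / D) := by
        rw [integral_Ioi_exp_sub_mul C hD, log_mul (exp_ne_zero C) (by positivity), log_exp]

end ExpDecay

/-- The hypothesis `hu` encodes that `u` is locally absolutely continuous with `u 0 = 0` and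
derivative `u'` almost everywhere. -/
theorem rough_exponential_hardy_inequality_general {n β₀ : ℝ} (hn : 1 < n)
    (hβ₀ : ((n - 1) / n) ^ ((n - 1) / n) < β₀) {u u' : ℝ → ℝ}
    (hu' : MemLp u' (ENNReal.ofReal n) (volume.restrict (Ioi 0)))
    (hu : ∀ r ∈ Ioi (0 : ℝ), u r = ∫ x in (0 : ℝ)..r, u' x) :
    IntegrableOn (fun r => exp (n * (u r - r))) (Ioi 0) ∧
    log (∫ r in Ioi (0 : ℝ), exp (n * (u r - r))) ≤
      β₀ ^ n * (∫ r in Ioi (0 : ℝ), |u' r| ^ n) +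
        log (1 / (n - (n - 1) * β₀ ^ (-(n / (n - 1))))) := by
  have hpq : n.HolderConjugate (n / (n - 1)) := .conjExponent hn
  have hβ_pos : 0 < β₀ := (rpow_pos_of_pos (div_pos hpq.sub_one_pos hpq.pos) _).trans hβ₀
  have hD : 0 < n - (n - 1) * β₀ ^ (-(n / (n - 1))) :=
    sub_pos.2 (sub_one_mul_rpow_neg_lt hpq (by rwa [inv_div]))
  have hu_cont : ContinuousOn u (Ioi 0) :=
    ((continuousOn_Ici_primitive fun _ => intervalIntegrable_of_memLp_Ioi
      (ENNReal.one_le_ofReal.2 hn.le) hu').mono Ioi_subset_Ici_self).congr hu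
  have hmeas : AEStronglyMeasurable (fun r => n * (u r - r)) (volume.restrict (Ioi 0)) :=
    ContinuousOn.aestronglyMeasurable (by fun_prop) measurableSet_Ioi
  have hle : ∀ᵐ r ∂volume.restrict (Ioi 0), n * (u r - r) ≤
      β₀ ^ n * (∫ r in Ioi (0 : ℝ), |u' r| ^ n) -
        (n - (n - 1) * β₀ ^ (-(n / (n - 1)))) * (r - 0) :=
    ae_restrict_of_forall_mem measurableSet_Ioi fun r hr => by
      have hgrowth := mul_primitive_le_of_memLp_Ioi hpq hβ_pos hu' (le_of_lt hr)
      rw [← hu r hr] at hgrowth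
      linarith
  exact ⟨integrableOn_Ioi_exp_of_le_sub_mul hD hmeas hle,
    log_integral_Ioi_exp_le_of_le_sub_mul hD hmeas hle⟩

/-- **Rough inequality** (Li–Zhu, Proposition 1, part 1).
For real `n > 1` and `β₀ > ((n-1)/n)^{(n-1)/n}`, with
`c₁(β₀) = ln (1/(n - (n-1) β₀^{-n/(n-1)}))`, every `C¹` function `u` on `[0,∞)`
with `u 0 = 0` and `∫₀^∞ |u'|ⁿ < ∞` satisfies
`ln ∫₀^∞ e^{n(u-r)} dr ≤ β₀ⁿ ∫₀^∞ |u'|ⁿ dr + c₁(β₀)`. -/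
theorem rough_exponential_hardy_inequality (n β₀ : ℝ) (hn : 1 < n)
    (hβ₀ : ((n - 1) / n) ^ ((n - 1) / n) < β₀)
    (u u' : ℝ → ℝ)
    (hderiv : ∀ r ∈ Set.Ici (0 : ℝ), HasDerivWithinAt u (u' r) (Set.Ici 0) r)
    (hcont : ContinuousOn u' (Set.Ici 0))
    (hu0 : u 0 = 0)
    (hint : IntegrableOn (fun r => |u' r| ^ n) (Set.Ioi 0)) :
    IntegrableOn (fun r => Real.exp (n * (u r - r))) (Set.Ioi 0) ∧
    Real.log (∫ r in Set.Ioi (0 : ℝ), Real.exp (n * (u r - r))) ≤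
      β₀ ^ n * (∫ r in Set.Ioi (0 : ℝ), |u' r| ^ n) +
        Real.log (1 / (n - (n - 1) * β₀ ^ (-(n / (n - 1))))) := by
  have hu' := memLp_of_hasDerivWithinAt_Ici (by linarith) hderiv hint
  exact rough_exponential_hardy_inequality_general hn hβ₀ hu' fun r hr => by
    rw [integral_eq_sub_of_hasDerivWithinAt_Ici hderiv (le_of_lt hr)
      (intervalIntegrable_of_memLp_Ioi (ENNReal.one_le_ofReal.2 hn.le) hu' (le_of_lt hr)),
      hu0, sub_zero]
end

section
/- Let n > 1 be a real number, let β₀ > ((n−1)/n)^{(n−1)/n}, and set c = n − (n−1)β₀^{−n/(n−1)} > 0. Then for every u ∈ C¹([0,∞)) with u(0) = 0 and ∫₀^∞ |u'(r)|ⁿ dr < ∞, and every R ≥ 0, ∫_R^∞ e^{n(u(r)−r)} dr ≤ exp(β₀ⁿ · ∫₀^∞ |u'(r)|ⁿ dr) · e^{−cR}/c. -/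
open MeasureTheory Real Set

/-!
Young's inequality with weight `β` gives `n (x - 1) ≤ βⁿ |x|ⁿ - c` for every real `x`. Integrating
this along `u'` bounds `n (u r - u 0 - r)` by `βⁿ ∫ |u'|ⁿ - c r`, so the integrand of the tail
decays at the exponential rate `c`. Only an upper bound on the increments of `u` is required, so
the mean value inequality for right derivatives can replace the fundamental theorem of calculus.
-/

/-- The exponential rate `c` at which `exp (n (u r - r))` decays when `u'` is in `Lⁿ`, as obtained
from Young's inequality with weight `β`. It is meaningful only for `n > 1` and `β > 0`. -/
noncomputable def decayRate (n β : ℝ) : ℝ :=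
  n - (n - 1) * β ^ (-(n / (n - 1)))

theorem decayRate_pos {n β : ℝ} (hn : 1 < n) (hβ : ((n - 1) / n) ^ ((n - 1) / n) < β) :
    0 < decayRate n β := by
  have hn' : 0 < n - 1 := sub_pos.2 hn
  have hθ : 0 < (n - 1) / n := by positivity
  have hpow : β ^ (-(n / (n - 1))) < n / (n - 1) := by
    calc β ^ (-(n / (n - 1)))
        < (((n - 1) / n) ^ ((n - 1) / n)) ^ (-(n / (n - 1))) :=
          rpow_lt_rpow_of_neg (rpow_pos_of_pos hθ _) hβ (neg_lt_zero.2 (by positivity))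
      _ = ((n - 1) / n) ^ (-1 : ℝ) := by
          rw [← rpow_mul hθ.le]
          congr 1
          field_simp
      _ = n / (n - 1) := by rw [rpow_neg_one, inv_div]
  exact sub_pos.2 ((lt_div_iff₀' hn').1 hpow)

theorem mul_sub_one_le_rpow_abs_sub_decayRate {n β : ℝ} (hn : 1 < n) (hβ : 0 < β) (x : ℝ) :
    n * (x - 1) ≤ β ^ n * |x| ^ n - decayRate n β := by
  have young : x ≤ β ^ n * |x| ^ n / n + β ^ (-(n / (n - 1))) / (n / (n - 1)) := by
    simpa [abs_mul, abs_of_pos hβ, mul_rpow hβ.le, inv_rpow hβ.le, rpow_neg hβ.le,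
      mul_right_comm β x, hβ.ne', conjExponent] using
      young_inequality (β * x) β⁻¹ (HolderConjugate.conjExponent hn)
  calc n * (x - 1)
      ≤ n * (β ^ n * |x| ^ n / n + β ^ (-(n / (n - 1))) / (n / (n - 1)) - 1) := by gcongr
    _ = β ^ n * |x| ^ n - decayRate n β := by
        rw [decayRate]
        field_simp [sub_ne_zero.2 hn.ne']
        ring

theorem mul_sub_sub_le_integral_rpow_abs_deriv {n β a b : ℝ} {u u' : ℝ → ℝ} (hn : 1 < n)
    (hβ : 0 < β) (hab : a ≤ b) (hcont : ContinuousOn u (Icc a b))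
    (hderiv : ∀ r ∈ Ioo a b, HasDerivWithinAt u (u' r) (Ioi r) r)
    (hint : IntegrableOn (fun r => |u' r| ^ n) (Ioc a b)) :
    n * (u b - u a - (b - a)) ≤
      β ^ n * (∫ r in a..b, |u' r| ^ n) - decayRate n β * (b - a) := by
  have hpow : IntervalIntegrable (fun r => β ^ n * |u' r| ^ n) volume a b :=
    ((intervalIntegrable_iff_integrableOn_Ioc_of_le hab).2 hint).const_mul _
  calc n * (u b - u a - (b - a)) = n * (u b - b) - n * (u a - a) := by ring
    _ ≤ ∫ r in a..b, (β ^ n * |u' r| ^ n - decayRate n β) :=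
        intervalIntegral.sub_le_integral_of_hasDeriv_right_of_le hab
          (continuousOn_const.mul (hcont.sub continuousOn_id))
          (fun r hr => ((hderiv r hr).sub (hasDerivWithinAt_id r _)).const_mul n)
          ((intervalIntegrable_iff_integrableOn_Icc_of_le hab).1
            (hpow.sub intervalIntegrable_const))
          (fun r _ => mul_sub_one_le_rpow_abs_sub_decayRate hn hβ (u' r))
    _ = β ^ n * (∫ r in a..b, |u' r| ^ n) - decayRate n β * (b - a) := by
        rw [intervalIntegral.integral_sub hpow intervalIntegrable_const,
          intervalIntegral.integral_const_mul, intervalIntegral.integral_const, smul_eq_mul,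
          mul_comm (b - a)]

theorem lintegral_exp_Ioi_le_of_le_sub_mul {f : ℝ → ℝ} {A c R : ℝ} (hc : 0 < c)
    (hf : ∀ r ∈ Ioi R, f r ≤ A - c * r) :
    ∫⁻ r in Ioi R, ENNReal.ofReal (exp (f r)) ≤ ENNReal.ofReal (exp A * exp (-(c * R)) / c) := by
  have hc' : -c < 0 := neg_lt_zero.2 hc
  calc ∫⁻ r in Ioi R, ENNReal.ofReal (exp (f r))
      ≤ ∫⁻ r in Ioi R, ENNReal.ofReal (exp A * exp (-(c * r))) := by
        refine setLIntegral_mono' measurableSet_Ioi fun r hr => ENNReal.ofReal_le_ofReal ?_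
        rw [← exp_add, ← sub_eq_add_neg]
        exact exp_le_exp.2 (hf r hr)
    _ = ENNReal.ofReal (∫ r in Ioi R, exp A * exp (-(c * r))) := by
        refine (ofReal_integral_eq_lintegral_ofReal ?_ (.of_forall fun r => by positivity)).symm
        simpa only [neg_mul] using (integrableOn_exp_mul_Ioi hc' R).const_mul (exp A)
    _ = ENNReal.ofReal (exp A * exp (-(c * R)) / c) := by
        simp only [← neg_mul, integral_const_mul, integral_exp_mul_Ioi hc', neg_div_neg_eq,
          mul_div_assoc]

theorem tail_estimate_general {n β : ℝ} (hn : 1 < n)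
    (hβ : ((n - 1) / n) ^ ((n - 1) / n) < β) {u u' : ℝ → ℝ}
    (hcont : ContinuousOn u (Ici 0))
    (hderiv : ∀ r ∈ Ioi (0 : ℝ), HasDerivWithinAt u (u' r) (Ioi r) r)
    (hint : IntegrableOn (fun r => |u' r| ^ n) (Ioi 0)) {R : ℝ} (hR : 0 ≤ R) :
    ∫⁻ r in Ioi R, ENNReal.ofReal (exp (n * (u r - u 0 - r))) ≤
      ENNReal.ofReal (exp (β ^ n * ∫ r in Ioi (0 : ℝ), |u' r| ^ n) *
        exp (-(decayRate n β * R)) / decayRate n β) := by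
  have hβ_pos : 0 < β :=
    (rpow_nonneg (div_nonneg (sub_pos.2 hn).le (by positivity)) _).trans_lt hβ
  refine lintegral_exp_Ioi_le_of_le_sub_mul (decayRate_pos hn hβ) fun r hr => ?_
  have hr0 : 0 ≤ r := hR.trans (le_of_lt hr)
  have growth : n * (u r - u 0 - r) ≤
      β ^ n * (∫ s in 0..r, |u' s| ^ n) - decayRate n β * r := by
    simpa only [sub_zero] using mul_sub_sub_le_integral_rpow_abs_deriv hn hβ_pos hr0
      (hcont.mono Icc_subset_Ici_self) (fun s hs => hderiv s hs.1)
      (hint.mono_set Ioc_subset_Ioi_self)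
  have energy_le : ∫ s in 0..r, |u' s| ^ n ≤ ∫ s in Ioi 0, |u' s| ^ n := by
    rw [intervalIntegral.integral_of_le hr0]
    exact setIntegral_mono_set hint (.of_forall fun s => by positivity)
      Ioc_subset_Ioi_self.eventuallyLE
  exact growth.trans (by gcongr)

/-- **Tail estimate** (Li–Zhu, Remark 1, inequality (2.4)).
For real `n > 1`, `β₀ > ((n-1)/n)^{(n-1)/n}` and `c = n - (n-1) β₀^{-n/(n-1)} > 0`,
every `C¹` function `u` on `[0,∞)` with `u 0 = 0` and `∫₀^∞ |u'|ⁿ < ∞` satisfies,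
for every `R ≥ 0`,
`∫_R^∞ e^{n(u-r)} dr ≤ exp (β₀ⁿ ∫₀^∞ |u'|ⁿ dr) · e^{-cR}/c`. -/
theorem tail_estimate (n β₀ : ℝ) (hn : 1 < n)
    (hβ₀ : ((n - 1) / n) ^ ((n - 1) / n) < β₀)
    (u u' : ℝ → ℝ)
    (hderiv : ∀ r ∈ Set.Ici (0 : ℝ), HasDerivWithinAt u (u' r) (Set.Ici 0) r)
    (hcont : ContinuousOn u' (Set.Ici 0))
    (hu0 : u 0 = 0)
    (hint : IntegrableOn (fun r => |u' r| ^ n) (Set.Ioi 0))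
    (R : ℝ) (hR : 0 ≤ R) :
    ∫⁻ r in Set.Ioi R, ENNReal.ofReal (Real.exp (n * (u r - r))) ≤
      ENNReal.ofReal
        (Real.exp (β₀ ^ n * ∫ r in Set.Ioi (0 : ℝ), |u' r| ^ n) *
          Real.exp (-((n - (n - 1) * β₀ ^ (-(n / (n - 1)))) * R)) /
            (n - (n - 1) * β₀ ^ (-(n / (n - 1))))) := by
  simpa only [decayRate, hu0, sub_zero] using tail_estimate_general hn hβ₀
    (fun r hr => (hderiv r hr).continuousWithinAt)
    (fun r hr => (hderiv r (mem_Ici_of_Ioi hr)).mono (Ioi_subset_Ici (le_of_lt hr))) hint hR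
end

section
/- Let n > 1 be a real number, let a > 0, and let β < n·a^{−1/(n−1)}. Then there exists a constant C (depending only on n, β and a) such that for every nonnegative u ∈ C¹([0,∞)) with u(0) = 0 and ∫₀^∞ |u'(r)|ⁿ dr ≤ a, one has ∫₀^∞ e^{β·u(r)^{n/(n−1)} − nr} dr ≤ C. -/
open MeasureTheory Real Set

/-!
By the fundamental theorem of calculus and Hölder's inequality, a function vanishing at `0` whose
derivative has `L^p` energy at most `a` grows at most like `‖u r‖ ^ q ≤ a ^ (q - 1) * r`, where
`q = p / (p - 1)`. The exponent `β * ‖u r‖ ^ q - κ * r` is therefore at most `-c * r` with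
`c = κ - max β 0 * a ^ (q - 1)`, and subcriticality of `β` is precisely what makes `c` positive.
-/

section ExponentialIntegral

lemma lintegral_exp_mul_Ioi {a : ℝ} (ha : a < 0) (c : ℝ) :
    ∫⁻ x in Ioi c, ENNReal.ofReal (exp (a * x)) = ENNReal.ofReal (-exp (a * c) / a) := by
  rw [← integral_exp_mul_Ioi ha, ofReal_integral_eq_lintegral_ofReal (integrableOn_exp_mul_Ioi ha c)
    (.of_forall fun x ↦ (exp_pos _).le)]

lemma lintegral_exp_mul_sub_mul_le_of_le_mul {v : ℝ → ℝ} {A β κ : ℝ} (hκ : 0 < κ)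
    (hβ : β * A < κ) (hv_nonneg : ∀ r ∈ Ioi 0, 0 ≤ v r) (hv : ∀ r ∈ Ioi 0, v r ≤ A * r) :
    ∫⁻ r in Ioi 0, ENNReal.ofReal (exp (β * v r - κ * r)) ≤
      ENNReal.ofReal (κ - max β 0 * A)⁻¹ := by
  have rate_pos : 0 < κ - max β 0 * A := by
    rcases max_choice β 0 with h | h <;> rw [h] <;> linarith
  calc ∫⁻ r in Ioi 0, ENNReal.ofReal (exp (β * v r - κ * r))
      ≤ ∫⁻ r in Ioi 0, ENNReal.ofReal (exp (-(κ - max β 0 * A) * r)) := by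
        refine setLIntegral_mono' measurableSet_Ioi fun r hr ↦ ?_
        gcongr
        calc β * v r - κ * r ≤ max β 0 * v r - κ * r := by
              gcongr
              exacts [hv_nonneg r hr, le_max_left β 0]
          _ ≤ max β 0 * (A * r) - κ * r := by
              gcongr
              exact hv r hr
          _ = -(κ - max β 0 * A) * r := by ring
    _ = ENNReal.ofReal (κ - max β 0 * A)⁻¹ := by
        rw [lintegral_exp_mul_Ioi (neg_lt_zero.2 rate_pos), mul_zero, exp_zero, neg_div_neg_eq,
          one_div]

end ExponentialIntegral

section Energy

variable {E : Type*} [NormedAddCommGroup E] {p q : ℝ}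

lemma integral_norm_rpow_le_mul_measureReal_univ {α : Type*} {_ : MeasurableSpace α}
    {μ : Measure α} [IsFiniteMeasure μ] (hpq : p.HolderConjugate q) {f : α → E}
    (hf : MemLp f (ENNReal.ofReal p) μ) :
    (∫ x, ‖f x‖ ∂μ) ^ q ≤ (∫ x, ‖f x‖ ^ p ∂μ) ^ (q - 1) * μ.real univ := by
  have energy_nonneg : 0 ≤ ∫ x, ‖f x‖ ^ p ∂μ := by positivity
  have holder : ∫ x, ‖f x‖ ∂μ ≤ (∫ x, ‖f x‖ ^ p ∂μ) ^ (1 / p) * μ.real univ ^ (1 / q) := by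
    simpa using integral_mul_le_Lp_mul_Lq_of_nonneg hpq (.of_forall fun x ↦ norm_nonneg (f x))
      (.of_forall fun _ ↦ zero_le_one) hf.norm (memLp_const (1 : ℝ))
  calc (∫ x, ‖f x‖ ∂μ) ^ q
      ≤ ((∫ x, ‖f x‖ ^ p ∂μ) ^ (1 / p) * μ.real univ ^ (1 / q)) ^ q :=
        rpow_le_rpow (by positivity) holder hpq.symm.nonneg
    _ = (∫ x, ‖f x‖ ^ p ∂μ) ^ (q - 1) * μ.real univ := by
        rw [mul_rpow (by positivity) (by positivity), ← rpow_mul energy_nonneg,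
          ← rpow_mul measureReal_nonneg, one_div_mul_cancel hpq.symm.ne_zero, rpow_one,
          one_div_mul_eq_div, hpq.symm.div_conj_eq_sub_one]

variable [NormedSpace ℝ E] [CompleteSpace E] {u u' : ℝ → E}

lemma aestronglyMeasurable_restrict_of_hasDerivWithinAt_Ioi {μ : Measure ℝ} {s : Set ℝ}
    (hs : MeasurableSet s) (hderiv : ∀ x ∈ s, HasDerivWithinAt u (u' x) (Ioi x) x) :
    AEStronglyMeasurable u' (μ.restrict s) :=
  (aestronglyMeasurable_derivWithin_Ioi u _).congr <| ae_restrict_of_forall_mem hs fun x hx ↦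
    (hderiv x hx).derivWithin (uniqueDiffWithinAt_Ioi x)

lemma norm_sub_rpow_le_integral_norm_deriv_rpow_mul (hpq : p.HolderConjugate q) {s t : ℝ}
    (hst : s ≤ t) (hcont : ContinuousOn u (Icc s t))
    (hderiv : ∀ x ∈ Ioo s t, HasDerivWithinAt u (u' x) (Ioi x) x)
    (hint : IntegrableOn (fun x ↦ ‖u' x‖ ^ p) (Ioo s t)) :
    ‖u t - u s‖ ^ q ≤ (∫ x in Ioo s t, ‖u' x‖ ^ p) ^ (q - 1) * (t - s) := by
  have hu'_meas : AEStronglyMeasurable u' (volume.restrict (Ioo s t)) :=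
    aestronglyMeasurable_restrict_of_hasDerivWithinAt_Ioi measurableSet_Ioo hderiv
  have hu'_memLp : MemLp u' (ENNReal.ofReal p) (volume.restrict (Ioo s t)) := by
    rw [← integrable_norm_rpow_iff hu'_meas (ENNReal.ofReal_pos.2 hpq.pos).ne'
      ENNReal.ofReal_ne_top, ENNReal.toReal_ofReal hpq.nonneg]
    exact hint
  have hu'_integrable : IntegrableOn u' (Ioo s t) :=
    hu'_memLp.integrable (ENNReal.one_le_ofReal.2 hpq.lt.le)
  have ftc : ∫ x in Ioo s t, u' x = u t - u s := by
    rw [← integral_Ioc_eq_integral_Ioo, ← intervalIntegral.integral_of_le hst]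
    exact intervalIntegral.integral_eq_sub_of_hasDeriv_right_of_le hst hcont hderiv
      ((intervalIntegrable_iff_integrableOn_Ioo_of_le hst).2 hu'_integrable)
  calc ‖u t - u s‖ ^ q ≤ (∫ x in Ioo s t, ‖u' x‖) ^ q := by
        rw [← ftc]
        exact rpow_le_rpow (norm_nonneg _) (norm_integral_le_integral_norm _) hpq.symm.nonneg
    _ ≤ (∫ x in Ioo s t, ‖u' x‖ ^ p) ^ (q - 1) * (t - s) := by
        simpa [hst] using integral_norm_rpow_le_mul_measureReal_univ hpq hu'_memLp

lemma norm_rpow_le_rpow_mul_of_integral_norm_deriv_rpow_le (hpq : p.HolderConjugate q) {a : ℝ}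
    (hcont : ContinuousOn u (Ici 0))
    (hderiv : ∀ r ∈ Ioi 0, HasDerivWithinAt u (u' r) (Ioi r) r) (h0 : u 0 = 0)
    (hint : IntegrableOn (fun r ↦ ‖u' r‖ ^ p) (Ioi 0))
    (hle : ∫ r in Ioi 0, ‖u' r‖ ^ p ≤ a) {r : ℝ} (hr : 0 ≤ r) :
    ‖u r‖ ^ q ≤ a ^ (q - 1) * r := by
  have energy_le : ∫ x in Ioo 0 r, ‖u' x‖ ^ p ≤ a :=
    (setIntegral_mono_set hint (.of_forall fun x ↦ by positivity)
      Ioo_subset_Ioi_self.eventuallyLE).trans hle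
  calc ‖u r‖ ^ q ≤ (∫ x in Ioo 0 r, ‖u' x‖ ^ p) ^ (q - 1) * r := by
        simpa [h0] using norm_sub_rpow_le_integral_norm_deriv_rpow_mul hpq hr
          (hcont.mono Icc_subset_Ici_self) (fun x hx ↦ hderiv x hx.1)
          (hint.mono_set Ioo_subset_Ioi_self)
    _ ≤ a ^ (q - 1) * r := by
        gcongr
        exact hpq.symm.sub_one_pos.le

/-- Writing subcriticality of `β` as a product keeps the case `a = 0` meaningful, where the critical
value `κ * a ^ (1 - q)` would be the junk value `0`. -/
theorem one_dimensional_moser_general (hpq : p.HolderConjugate q) {a β κ : ℝ} (hκ : 0 < κ)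
    (hβ : β * a ^ (q - 1) < κ) (hcont : ContinuousOn u (Ici 0))
    (hderiv : ∀ r ∈ Ioi 0, HasDerivWithinAt u (u' r) (Ioi r) r) (h0 : u 0 = 0)
    (hint : IntegrableOn (fun r ↦ ‖u' r‖ ^ p) (Ioi 0))
    (hle : ∫ r in Ioi 0, ‖u' r‖ ^ p ≤ a) :
    ∫⁻ r in Ioi 0, ENNReal.ofReal (exp (β * ‖u r‖ ^ q - κ * r)) ≤
      ENNReal.ofReal (κ - max β 0 * a ^ (q - 1))⁻¹ :=
  lintegral_exp_mul_sub_mul_le_of_le_mul hκ hβ (fun r _ ↦ by positivity) fun _ hr ↦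
    norm_rpow_le_rpow_mul_of_integral_norm_deriv_rpow_le hpq hcont hderiv h0 hint hle hr.le

end Energy

/-- **One-dimensional Moser-type inequality** (Li–Zhu, Lemma 1).
For real `n > 1`, `a > 0` and `β < n a^{-1/(n-1)}`, there is a constant `C`
(depending only on `n`, `β`, `a`) such that every nonnegative `C¹` function `u`
on `[0,∞)` with `u 0 = 0` and `∫₀^∞ |u'|ⁿ dr ≤ a` satisfies
`∫₀^∞ e^{β u^{n/(n-1)} - nr} dr ≤ C`. -/
theorem one_dimensional_moser (n a β : ℝ) (hn : 1 < n) (ha : 0 < a)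
    (hβ : β < n * a ^ (-(1 / (n - 1)))) :
    ∃ C : ℝ, ∀ u u' : ℝ → ℝ,
      (∀ r ∈ Set.Ici (0 : ℝ), HasDerivWithinAt u (u' r) (Set.Ici 0) r) →
      ContinuousOn u' (Set.Ici 0) →
      (∀ r ∈ Set.Ici (0 : ℝ), 0 ≤ u r) →
      u 0 = 0 →
      IntegrableOn (fun r => |u' r| ^ n) (Set.Ioi 0) →
      (∫ r in Set.Ioi (0 : ℝ), |u' r| ^ n) ≤ a →
      ∫⁻ r in Set.Ioi (0 : ℝ),
          ENNReal.ofReal (Real.exp (β * u r ^ (n / (n - 1)) - n * r)) ≤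
        ENNReal.ofReal C := by
  have hpq : n.HolderConjugate (n / (n - 1)) := .conjExponent hn
  have hβ' : β * a ^ (n / (n - 1) - 1) < n := by
    rwa [div_sub_one hpq.sub_one_ne_zero, sub_sub_cancel, ← lt_div_iff₀ (rpow_pos_of_pos ha _),
      div_eq_mul_inv, ← rpow_neg ha.le]
  refine ⟨(n - max β 0 * a ^ (n / (n - 1) - 1))⁻¹,
    fun u u' hderiv _ hu_nonneg h0 hint hle ↦ ?_⟩
  refine le_of_eq_of_le (setLIntegral_congr_fun measurableSet_Ioi fun r hr ↦ ?_) <|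
    one_dimensional_moser_general hpq hpq.pos hβ'
      (HasDerivWithinAt.continuousOn hderiv)
      (fun r hr ↦ (hderiv r (Ioi_subset_Ici_self hr)).mono (Ioi_subset_Ici hr.le)) h0 hint hle
  simp only [norm_of_nonneg (hu_nonneg r (Ioi_subset_Ici_self hr))]
end

section
/- Let n ≥ 2 be an integer, let Ω ⊂ ℝⁿ be a bounded open set, and let β < n·ω_{n−1}^{1/(n−1)}. Then there exists a constant C(Ω, β), depending only on the Lebesgue measure of Ω and on β, such that for every u ∈ C¹_c(Ω) (continuously differentiable with compact support in Ω) with ∫_Ω |∇u(x)|ⁿ dx ≤ 1, one has ∫_Ω e^{β·|u(x)|^{n/(n−1)}} dx ≤ C(Ω, β). -/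
open MeasureTheory Real Set Metric

/-!
Let `d` be the dimension, `q = d / (d - 1)` and `ω` the area of the unit sphere. Integrating `∇u`
along rays and averaging over directions gives `ω |u(x)| ≤ ∫ |∇u(x + z)| |z|^(1 - d) dz`; split this
integral at `|z| = e⁻ᵗ`. By Hölder the far part is at most `(ω t + |Ω|)^(1/q)`, because
`∫ |z|⁻ᵈ = ω t` over the annulus `e⁻ᵗ ≤ |z| < 1`. The near part is a convolution of `|∇u|` with a
kernel of mass `ω e⁻ᵗ`, so by Young and Chebyshev it exceeds `1` on a set of measure at most
`(ω e⁻ᵗ)ᵈ`. Hence `|u| > (1 + (ω t + |Ω|)^(1/q)) / ω` only on such a set. The `q`-th power of this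
level is asymptotic to `t ω^(1 - q)`, so the layers `t = k, k + 1` contribute to `∫ exp (β |u|^q)`
like a geometric series of ratio `exp (β ω^(1 - q) - d)`, which converges exactly for
`β < d ω^(q - 1)`.
-/

open Filter Function Module Topology
open scoped ENNReal

section Measure

theorem lintegral_rpow_le_measure_univ_mul {α : Type*} [MeasurableSpace α] {ν : Measure α}
    {p : ℝ} (hp : 1 ≤ p) {f : α → ℝ≥0∞} (hf : AEMeasurable f ν) :
    (∫⁻ x, f x ∂ν) ^ p ≤ ν univ ^ (p - 1) * ∫⁻ x, f x ^ p ∂ν := by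
  have hp₀ : p ≠ 0 := by positivity
  have h_mono := eLpNorm'_le_eLpNorm'_mul_rpow_measure_univ one_pos hp hf.aestronglyMeasurable
  simp only [eLpNorm', enorm_eq_self, ENNReal.rpow_one, div_one] at h_mono
  calc (∫⁻ x, f x ∂ν) ^ p
      ≤ ((∫⁻ x, f x ^ p ∂ν) ^ (1 / p) * ν univ ^ (1 - 1 / p)) ^ p := by gcongr
    _ = ν univ ^ (p - 1) * ∫⁻ x, f x ^ p ∂ν := by
        rw [ENNReal.mul_rpow_of_nonneg _ _ (by positivity), ← ENNReal.rpow_mul,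
          ← ENNReal.rpow_mul, one_div_mul_cancel hp₀, ENNReal.rpow_one, one_sub_mul,
          one_div_mul_cancel hp₀, mul_comm]

theorem lintegral_lintegral_add_rpow_le {G : Type*} [AddGroup G] [MeasurableSpace G]
    [MeasurableAdd₂ G] (μ ν : Measure G) [SFinite μ] [SFinite ν] [μ.IsAddRightInvariant]
    {p : ℝ} (hp : 1 ≤ p) {f : G → ℝ≥0∞} (hf : Measurable f) :
    ∫⁻ x, (∫⁻ z, f (x + z) ∂ν) ^ p ∂μ ≤ ν univ ^ p * ∫⁻ x, f x ^ p ∂μ := by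
  have h_sum : Measurable fun w : G × G ↦ f (w.1 + w.2) ^ p := by fun_prop
  calc ∫⁻ x, (∫⁻ z, f (x + z) ∂ν) ^ p ∂μ
      ≤ ∫⁻ x, ν univ ^ (p - 1) * ∫⁻ z, f (x + z) ^ p ∂ν ∂μ :=
        lintegral_mono fun x ↦ lintegral_rpow_le_measure_univ_mul hp (by fun_prop)
    _ = ν univ ^ (p - 1) * ∫⁻ z, ∫⁻ x, f (x + z) ^ p ∂μ ∂ν := by
        rw [lintegral_const_mul _ h_sum.lintegral_prod_right',
          lintegral_lintegral_swap h_sum.aemeasurable]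
    _ = ν univ ^ (p - 1) * (ν univ * ∫⁻ x, f x ^ p ∂μ) := by
        simp only [lintegral_add_right_eq_self fun x ↦ f x ^ p, lintegral_const, mul_comm]
    _ = ν univ ^ p * ∫⁻ x, f x ^ p ∂μ := by
        conv_rhs => rw [← sub_add_cancel p 1,
          ENNReal.rpow_add_of_nonneg _ _ (sub_nonneg.2 hp) zero_le_one, ENNReal.rpow_one]
        rw [mul_assoc, sub_add_cancel]

theorem lintegral_le_add_tsum_measure_compl {α : Type*} [MeasurableSpace α] (μ : Measure α)
    {A : ℕ → Set α} (hA : ∀ k, MeasurableSet (A k)) (hA_univ : ⋃ k, A k = univ)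
    {g : α → ℝ≥0∞} {c : ℕ → ℝ≥0∞} (hg : ∀ k, ∀ x ∈ A k, g x ≤ c k) :
    ∫⁻ x, g x ∂μ ≤ c 0 * μ univ + ∑' k, c (k + 1) * μ (A k)ᶜ := by
  classical
  have h_le (x : α) : g x ≤ c 0 + ∑' k, (A k)ᶜ.indicator (fun _ ↦ c (k + 1)) x := by
    have h_ex : ∃ k, x ∈ A k := mem_iUnion.1 (hA_univ ▸ mem_univ x)
    have h_mem := Nat.find_spec h_ex
    rcases h_find : Nat.find h_ex with _ | k
    · exact (hg 0 x (h_find ▸ h_mem)).trans le_self_add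
    · have h_notMem : x ∈ (A k)ᶜ := Nat.find_min h_ex (by lia)
      calc g x ≤ c (k + 1) := hg _ x (h_find ▸ h_mem)
        _ = (A k)ᶜ.indicator (fun _ ↦ c (k + 1)) x := by rw [indicator_of_mem h_notMem]
        _ ≤ _ := (ENNReal.le_tsum k).trans le_add_self
  calc ∫⁻ x, g x ∂μ
      ≤ ∫⁻ x, c 0 + ∑' k, (A k)ᶜ.indicator (fun _ ↦ c (k + 1)) x ∂μ := lintegral_mono h_le
    _ = c 0 * μ univ + ∑' k, c (k + 1) * μ (A k)ᶜ := by
        rw [lintegral_add_left measurable_const, lintegral_const, lintegral_tsum fun k ↦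
          (measurable_const.indicator (hA k).compl).aemeasurable]
        simp only [lintegral_indicator_const (hA _).compl]

end Measure

section FDeriv

variable {E F : Type*} [NormedAddCommGroup E] [NormedSpace ℝ E] [NormedAddCommGroup F]
  [NormedSpace ℝ F] {u : E → F}

theorem enorm_le_lintegral_Ioi_enorm_fderiv (hu : ContDiff ℝ 1 u) (hu_supp : HasCompactSupport u)
    (x : E) {θ : E} (hθ : ‖θ‖ = 1) :
    ‖u x‖ₑ ≤ ∫⁻ r in Ioi (0 : ℝ), ‖fderiv ℝ u (x + r • θ)‖ₑ := by
  have hθ₀ : θ ≠ 0 := norm_ne_zero_iff.1 (hθ ▸ one_ne_zero)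
  let γ (t : ℝ) : E := x - t • θ
  have hγ (t : ℝ) : HasDerivAt γ (-θ) t := by
    simpa using ((hasDerivAt_id t).smul_const θ).const_sub x
  have hγ_emb : IsClosedEmbedding γ :=
    (Homeomorph.subLeft x).isClosedEmbedding.comp (isClosedEmbedding_smul_left hθ₀)
  have h_deriv (t : ℝ) : ‖deriv (u ∘ γ) t‖ₑ ≤ ‖fderiv ℝ u (γ t)‖ₑ := by
    rw [((hu.differentiable one_ne_zero (γ t)).hasFDerivAt.comp_hasDerivAt t (hγ t)).deriv,
      enorm_le_iff_norm_le]
    simpa [hθ] using (fderiv ℝ u (γ t)).le_opNorm (-θ)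
  calc ‖u x‖ₑ = ‖(u ∘ γ) 0‖ₑ := by simp [γ]
    _ ≤ ∫⁻ t in Iic 0, ‖deriv (u ∘ γ) t‖ₑ :=
        (hu_supp.comp_isClosedEmbedding hγ_emb).enorm_le_lintegral_Ici_deriv
          (hu.comp (by fun_prop)) 0
    _ ≤ ∫⁻ t in Iic 0, ‖fderiv ℝ u (γ t)‖ₑ := lintegral_mono h_deriv
    _ = ∫⁻ r in Ioi (0 : ℝ), ‖fderiv ℝ u (x + r • θ)‖ₑ := by
        rw [setLIntegral_congr Ioi_ae_eq_Ici, ← lintegral_indicator measurableSet_Iic,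
          ← lintegral_neg_eq_self, ← lintegral_indicator measurableSet_Ici]
        simp [indicator, γ]

theorem lintegral_enorm_fderiv_pow_le_of_setIntegral_le [MeasurableSpace E]
    [OpensMeasurableSpace E] (μ : Measure E) [IsFiniteMeasureOnCompacts μ] {Ω : Set E}
    (hu : ContDiff ℝ 1 u) (hu_supp : HasCompactSupport u) (huΩ : tsupport u ⊆ Ω) {n : ℕ}
    (hn : n ≠ 0) {M : ℝ} (h_grad : ∫ x in Ω, ‖fderiv ℝ u x‖ ^ n ∂μ ≤ M) :
    ∫⁻ x, ‖fderiv ℝ u x‖ₑ ^ n ∂μ ≤ ENNReal.ofReal M := by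
  have h_cont : Continuous fun x ↦ ‖fderiv ℝ u x‖ ^ n :=
    (hu.continuous_fderiv one_ne_zero).norm.pow n
  have h_integrable : Integrable (fun x ↦ ‖fderiv ℝ u x‖ ^ n) μ :=
    h_cont.integrable_of_hasCompactSupport <|
      (hu_supp.fderiv ℝ).comp_left (g := fun L ↦ ‖L‖ ^ n) (by simp [hn])
  have h_zero : ∀ x ∉ Ω, ‖fderiv ℝ u x‖ ^ n = 0 := fun x hx ↦ by
    rw [fderiv_of_notMem_tsupport ℝ (notMem_subset huΩ hx), norm_zero, zero_pow hn]
  calc ∫⁻ x, ‖fderiv ℝ u x‖ₑ ^ n ∂μ = ∫⁻ x, ENNReal.ofReal (‖fderiv ℝ u x‖ ^ n) ∂μ := by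
        simp only [ENNReal.ofReal_pow (norm_nonneg _), ofReal_norm]
    _ = ENNReal.ofReal (∫ x in Ω, ‖fderiv ℝ u x‖ ^ n ∂μ) := by
        rw [setIntegral_eq_integral_of_forall_compl_eq_zero h_zero,
          ofReal_integral_eq_lintegral_ofReal h_integrable (ae_of_all _ fun _ ↦ by positivity)]
    _ ≤ ENNReal.ofReal M := ENNReal.ofReal_le_ofReal h_grad

end FDeriv

section Riesz

variable {E : Type*} [NormedAddCommGroup E] [NormedSpace ℝ E] [MeasurableSpace E]

/-- The measure `‖z‖ ^ (1 - d) dμ(z)` on a space of dimension `d`, so that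
`∫⁻ z, f (x + z) ∂rieszMeasure μ` is, up to normalization, the Riesz potential of order one of
`f` at `x`. -/
noncomputable def rieszMeasure (μ : Measure E) : Measure E :=
  μ.withDensity fun z ↦ (‖z‖ₑ ^ (finrank ℝ E - 1))⁻¹

instance (μ : Measure E) [SFinite μ] : SFinite (rieszMeasure μ) :=
  inferInstanceAs (SFinite (μ.withDensity _))

variable [BorelSpace E]

theorem setLIntegral_rieszMeasure (μ : Measure E) {s : Set E} (hs : MeasurableSet s)
    {g : E → ℝ≥0∞} (hg : Measurable g) :
    ∫⁻ z in s, g z ∂rieszMeasure μ = ∫⁻ z in s, (‖z‖ₑ ^ (finrank ℝ E - 1))⁻¹ * g z ∂μ := by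
  rw [rieszMeasure, restrict_withDensity hs,
    lintegral_withDensity_eq_lintegral_mul _ (by fun_prop) hg]
  rfl

variable [FiniteDimensional ℝ E] (μ : Measure E) [μ.IsAddHaarMeasure]

theorem toSphere_real_univ_pos [Nontrivial E] : 0 < μ.toSphere.real univ := by
  have : NeZero μ.toSphere := ⟨μ.toSphere_ne_zero⟩
  exact measureReal_univ_pos

theorem lintegral_eq_lintegral_toSphere [Nontrivial E] {g : E → ℝ≥0∞} (hg : Measurable g) :
    ∫⁻ z, g z ∂μ = ∫⁻ θ : sphere (0 : E) 1, ∫⁻ r in Ioi (0 : ℝ),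
      ENNReal.ofReal r ^ (finrank ℝ E - 1) * g (r • (θ : E)) ∂volume ∂μ.toSphere := by
  calc ∫⁻ z, g z ∂μ = ∫⁻ z : ({0}ᶜ : Set E), g z ∂μ.comap Subtype.val := by
        rw [lintegral_subtype_comap (measurableSet_singleton _).compl, restrict_compl_singleton]
    _ = ∫⁻ y, g (y.2.1 • (y.1 : E)) ∂μ.toSphere.prod (.volumeIoiPow (finrank ℝ E - 1)) := by
        rw [← μ.measurePreserving_homeomorphUnitSphereProd.lintegral_comp_emb
          (Homeomorph.measurableEmbedding _)]
        simp only [← homeomorphUnitSphereProd_symm_apply_coe, Homeomorph.symm_apply_apply]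
    _ = _ := by
        rw [lintegral_prod _ (by fun_prop)]
        refine lintegral_congr fun θ ↦ ?_
        rw [Measure.volumeIoiPow, lintegral_withDensity_eq_lintegral_mul _ (by fun_prop)
          (by fun_prop), ← lintegral_subtype_comap measurableSet_Ioi]
        exact lintegral_congr fun r ↦ by simp [ENNReal.ofReal_pow r.2.out.le]

theorem lintegral_rieszMeasure [Nontrivial E] {g : E → ℝ≥0∞} (hg : Measurable g) :
    ∫⁻ z, g z ∂rieszMeasure μ =
      ∫⁻ θ : sphere (0 : E) 1, ∫⁻ r in Ioi (0 : ℝ), g (r • (θ : E)) ∂volume ∂μ.toSphere := by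
  rw [← setLIntegral_univ, setLIntegral_rieszMeasure μ .univ hg, setLIntegral_univ,
    lintegral_eq_lintegral_toSphere μ (by fun_prop)]
  refine lintegral_congr fun θ ↦ setLIntegral_congr_fun measurableSet_Ioi fun r hr ↦ ?_
  have h_norm : ‖r • (θ : E)‖ₑ = ENNReal.ofReal r := by
    rw [← ofReal_norm, norm_smul, norm_eq_of_mem_sphere, mul_one, norm_of_nonneg hr.out.le]
  simp only [h_norm]
  exact ENNReal.mul_inv_cancel_left (pow_ne_zero _ (ENNReal.ofReal_pos.2 hr).ne') (by finiteness)

theorem map_norm_rieszMeasure [Nontrivial E] :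
    (rieszMeasure μ).map norm = μ.toSphere univ • volume.restrict (Ioi (0 : ℝ)) := by
  ext s hs
  rw [Measure.map_apply measurable_norm hs, ← lintegral_indicator_one (measurable_norm hs),
    lintegral_rieszMeasure μ (measurable_one.indicator (measurable_norm hs))]
  have h_ray (θ : sphere (0 : E) 1) : ∫⁻ r in Ioi (0 : ℝ),
      (norm ⁻¹' s).indicator (1 : E → ℝ≥0∞) (r • (θ : E)) = volume.restrict (Ioi (0 : ℝ)) s := by
    rw [← lintegral_indicator_one hs]
    refine setLIntegral_congr_fun measurableSet_Ioi fun r hr ↦ ?_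
    have h_norm : ‖r • (θ : E)‖ = r := by
      rw [norm_smul, norm_eq_of_mem_sphere, mul_one, norm_of_nonneg hr.out.le]
    exact congrArg (s.indicator (1 : ℝ → ℝ≥0∞)) h_norm
  simp [h_ray, mul_comm]

theorem rieszMeasure_ball_zero [Nontrivial E] (δ : ℝ) :
    rieszMeasure μ (ball 0 δ) = μ.toSphere univ * ENNReal.ofReal δ := by
  have h_ball : ball (0 : E) δ = norm ⁻¹' Iio δ := by ext; simp
  rw [h_ball, ← Measure.map_apply measurable_norm measurableSet_Iio, map_norm_rieszMeasure,
    Measure.smul_apply, Measure.restrict_apply measurableSet_Iio, Iio_inter_Ioi, Real.volume_Ioo,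
    sub_zero, smul_eq_mul]

theorem setLIntegral_Ico_ofReal_inv {a b : ℝ} (ha : 0 < a) (hab : a ≤ b) :
    ∫⁻ r in Ico a b, ENNReal.ofReal r⁻¹ = ENNReal.ofReal (log (b / a)) := by
  have h_cont : ContinuousOn (fun r : ℝ ↦ r⁻¹) (uIcc a b) :=
    continuousOn_inv₀.mono fun r hr ↦ (ha.trans_le (uIcc_of_le hab ▸ hr).1).ne'
  rw [setLIntegral_congr Ico_ae_eq_Ioc, ← ofReal_integral_eq_lintegral_ofReal
      h_cont.intervalIntegrable.1, ← intervalIntegral.integral_of_le hab,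
    integral_inv_of_pos ha (ha.trans_le hab)]
  filter_upwards [ae_restrict_mem measurableSet_Ioc] with r hr
  exact (inv_pos.2 (ha.trans hr.1)).le

theorem setLIntegral_annulus_inv_enorm_pow_finrank [Nontrivial E] {a b : ℝ} (ha : 0 < a)
    (hab : a ≤ b) :
    ∫⁻ z in ball (0 : E) b \ ball 0 a, (‖z‖ₑ ^ finrank ℝ E)⁻¹ ∂μ =
      μ.toSphere univ * ENNReal.ofReal (log (b / a)) := by
  have h_annulus : ball (0 : E) b \ ball 0 a = norm ⁻¹' Ico a b := by ext; simp [and_comm]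
  calc ∫⁻ z in ball (0 : E) b \ ball 0 a, (‖z‖ₑ ^ finrank ℝ E)⁻¹ ∂μ
      = ∫⁻ z in norm ⁻¹' Ico a b, (ENNReal.ofReal ‖z‖)⁻¹ ∂rieszMeasure μ := by
        rw [setLIntegral_rieszMeasure μ (measurable_norm measurableSet_Ico) (by fun_prop),
          h_annulus]
        refine lintegral_congr fun z ↦ ?_
        rw [← ENNReal.mul_inv (.inr (by finiteness)) (.inl (by finiteness)), ofReal_norm,
          ← pow_succ, Nat.sub_add_cancel finrank_pos]
    _ = ∫⁻ r in Ico a b, (ENNReal.ofReal r)⁻¹ ∂(μ.toSphere univ • volume.restrict (Ioi 0)) := by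
        rw [← map_norm_rieszMeasure, setLIntegral_map measurableSet_Ico (by fun_prop)
          measurable_norm]
    _ = μ.toSphere univ * ∫⁻ r in Ico a b, ENNReal.ofReal r⁻¹ := by
        have h_pos : Ico a b ⊆ Ioi 0 := fun r hr ↦ ha.trans_le hr.1
        rw [Measure.restrict_smul, lintegral_smul_measure,
          Measure.restrict_restrict_of_subset h_pos, smul_eq_mul]
        congr 1
        exact setLIntegral_congr_fun measurableSet_Ico fun r hr ↦
          (ENNReal.ofReal_inv_of_pos (h_pos hr)).symm
    _ = μ.toSphere univ * ENNReal.ofReal (log (b / a)) := by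
        rw [setLIntegral_Ico_ofReal_inv ha hab]

theorem measure_one_le_setLIntegral_ball_rieszMeasure_le [Nontrivial E] {p : ℝ} (hp : 1 ≤ p)
    {f : E → ℝ≥0∞} (hf : Measurable f) (a : ℝ) :
    μ {x | 1 ≤ ∫⁻ z in ball 0 a, f (x + z) ∂rieszMeasure μ} ≤
      (μ.toSphere univ * ENNReal.ofReal a) ^ p * ∫⁻ x, f x ^ p ∂μ := by
  let near (x : E) : ℝ≥0∞ := ∫⁻ z in ball 0 a, f (x + z) ∂rieszMeasure μ
  have h_meas : Measurable near :=
    Measurable.lintegral_prod_right' (f := fun w : E × E ↦ f (w.1 + w.2)) (by fun_prop)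
  calc μ {x | 1 ≤ near x} ≤ μ {x | 1 ≤ near x ^ p} :=
        measure_mono fun x hx ↦ ENNReal.one_le_rpow hx (by positivity)
    _ ≤ ∫⁻ x, near x ^ p ∂μ := by
        simpa using mul_meas_ge_le_lintegral (h_meas.pow_const p) 1
    _ ≤ (rieszMeasure μ).restrict (ball 0 a) univ ^ p * ∫⁻ x, f x ^ p ∂μ :=
        lintegral_lintegral_add_rpow_le μ _ hp hf
    _ = (μ.toSphere univ * ENNReal.ofReal a) ^ p * ∫⁻ x, f x ^ p ∂μ := by
        rw [Measure.restrict_apply_univ, rieszMeasure_ball_zero]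

variable {F : Type*} [NormedAddCommGroup F] [NormedSpace ℝ F] {u : E → F}

theorem toSphere_univ_mul_enorm_le_lintegral_rieszMeasure [Nontrivial E] (hu : ContDiff ℝ 1 u)
    (hu_supp : HasCompactSupport u) (x : E) :
    μ.toSphere univ * ‖u x‖ₑ ≤ ∫⁻ z, ‖fderiv ℝ u (x + z)‖ₑ ∂rieszMeasure μ := by
  have : Continuous (fderiv ℝ u) := hu.continuous_fderiv one_ne_zero
  rw [lintegral_rieszMeasure μ (by fun_prop), mul_comm, ← lintegral_const]
  exact lintegral_mono fun θ ↦
    enorm_le_lintegral_Ioi_enorm_fderiv hu hu_supp x (norm_eq_of_mem_sphere θ)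

variable {q : ℝ}

theorem setLIntegral_compl_ball_inv_enorm_pow_rpow_le [Nontrivial E]
    (hq : (finrank ℝ E : ℝ).HolderConjugate q) {a : ℝ} (ha₀ : 0 < a) (ha₁ : a ≤ 1)
    {s : Set E} (hs : MeasurableSet s) :
    ∫⁻ z in (ball 0 a)ᶜ ∩ s, (‖z‖ₑ ^ (finrank ℝ E - 1))⁻¹ ^ q ∂μ ≤
      μ.toSphere univ * ENNReal.ofReal (-log a) + μ s := by
  have h_exp : ((finrank ℝ E - 1 : ℕ) : ℝ) * q = finrank ℝ E := by
    rw [Nat.cast_pred finrank_pos, hq.sub_one_mul_conj]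
  simp_rw [ENNReal.inv_rpow, ← ENNReal.rpow_natCast, ← ENNReal.rpow_mul, h_exp,
    ENNReal.rpow_natCast]
  rw [← lintegral_inter_add_sdiff _ _ (measurableSet_ball (x := (0 : E)) (ε := 1))]
  gcongr ?_ + ?_
  · calc ∫⁻ z in (ball 0 a)ᶜ ∩ s ∩ ball 0 1, (‖z‖ₑ ^ finrank ℝ E)⁻¹ ∂μ
        ≤ ∫⁻ z in ball 0 1 \ ball 0 a, (‖z‖ₑ ^ finrank ℝ E)⁻¹ ∂μ :=
          lintegral_mono_set fun z hz ↦ ⟨hz.2, hz.1.1⟩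
      _ = μ.toSphere univ * ENNReal.ofReal (-log a) := by
          rw [setLIntegral_annulus_inv_enorm_pow_finrank μ ha₀ ha₁, one_div, log_inv]
  · calc ∫⁻ z in ((ball 0 a)ᶜ ∩ s) \ ball 0 1, (‖z‖ₑ ^ finrank ℝ E)⁻¹ ∂μ
        ≤ ∫⁻ _ in ((ball 0 a)ᶜ ∩ s) \ ball 0 1, 1 ∂μ := by
          refine setLIntegral_mono' ((measurableSet_ball.compl.inter hs).diff measurableSet_ball)
            fun z hz ↦ ?_
          have h_norm : 1 ≤ ‖z‖ₑ := by
            rw [← ofReal_norm, ENNReal.one_le_ofReal]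
            simpa using hz.2
          exact ENNReal.inv_le_one.2 (one_le_pow₀ h_norm)
      _ ≤ μ s := by
          rw [setLIntegral_one]
          exact measure_mono fun z hz ↦ hz.1.2

theorem setLIntegral_compl_ball_rieszMeasure_le (hq : (finrank ℝ E : ℝ).HolderConjugate q)
    {f : E → ℝ≥0∞} (hf : Measurable f) (x : E) {a : ℝ} (ha₀ : 0 < a) (ha₁ : a ≤ 1) :
    ∫⁻ z in (ball 0 a)ᶜ, f (x + z) ∂rieszMeasure μ ≤
      (∫⁻ z, f z ^ finrank ℝ E ∂μ) ^ (1 / (finrank ℝ E : ℝ)) *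
        (μ.toSphere univ * ENNReal.ofReal (-log a) + μ (support f)) ^ (1 / q) := by
  have : Nontrivial E := nontrivial_of_finrank_pos (R := ℝ) (mod_cast hq.pos)
  have hs : MeasurableSet ((x + ·) ⁻¹' support f) := by
    exact measurable_const_add x (measurableSet_support hf)
  calc ∫⁻ z in (ball 0 a)ᶜ, f (x + z) ∂rieszMeasure μ
      = ∫⁻ z in (ball 0 a)ᶜ ∩ (x + ·) ⁻¹' support f,
          f (x + z) * (‖z‖ₑ ^ (finrank ℝ E - 1))⁻¹ ∂μ := by
        rw [setLIntegral_rieszMeasure μ measurableSet_ball.compl (by fun_prop),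
          inter_comm, ← setLIntegral_indicator hs]
        refine lintegral_congr fun z ↦ ?_
        by_cases hz : f (x + z) = 0 <;> simp [indicator, hz, mul_comm]
    _ ≤ (∫⁻ z, f (x + z) ^ (finrank ℝ E : ℝ) ∂μ) ^ (1 / (finrank ℝ E : ℝ)) *
          (μ.toSphere univ * ENNReal.ofReal (-log a) + μ ((x + ·) ⁻¹' support f)) ^ (1 / q) := by
        have hq₀ := hq.symm.pos
        refine (ENNReal.lintegral_mul_le_Lp_mul_Lq _ hq (by fun_prop) (by fun_prop)).trans ?_
        gcongr
        · exact Measure.restrict_le_self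
        · exact setLIntegral_compl_ball_inv_enorm_pow_rpow_le μ hq ha₀ ha₁ hs
    _ = _ := by
        simp_rw [ENNReal.rpow_natCast]
        rw [lintegral_add_left_eq_self fun z ↦ f z ^ finrank ℝ E, measure_preimage_add]

theorem toSphere_univ_mul_enorm_le_setLIntegral_ball_add
    (hq : (finrank ℝ E : ℝ).HolderConjugate q) (hu : ContDiff ℝ 1 u)
    (hu_supp : HasCompactSupport u) (x : E) {a : ℝ} (ha₀ : 0 < a) (ha₁ : a ≤ 1) :
    μ.toSphere univ * ‖u x‖ₑ ≤
      ∫⁻ z in ball 0 a, ‖fderiv ℝ u (x + z)‖ₑ ∂rieszMeasure μ +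
        (∫⁻ z, ‖fderiv ℝ u z‖ₑ ^ finrank ℝ E ∂μ) ^ (1 / (finrank ℝ E : ℝ)) *
          (μ.toSphere univ * ENNReal.ofReal (-log a) + μ (support (fderiv ℝ u))) ^ (1 / q) := by
  have : Nontrivial E := nontrivial_of_finrank_pos (R := ℝ) (mod_cast hq.pos)
  have h_supp : support (fun z ↦ ‖fderiv ℝ u z‖ₑ) = support (fderiv ℝ u) := by
    ext; simp [← ofReal_norm]
  have h_meas : Measurable fun z ↦ ‖fderiv ℝ u z‖ₑ :=
    (hu.continuous_fderiv one_ne_zero).enorm.measurable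
  refine (toSphere_univ_mul_enorm_le_lintegral_rieszMeasure μ hu hu_supp x).trans ?_
  rw [← lintegral_add_compl _ measurableSet_ball, ← h_supp]
  gcongr
  exact setLIntegral_compl_ball_rieszMeasure_le μ hq h_meas x ha₀ ha₁

theorem measure_lt_toSphere_univ_mul_enorm_le (hq : (finrank ℝ E : ℝ).HolderConjugate q)
    (hu : ContDiff ℝ 1 u) (hu_supp : HasCompactSupport u)
    (h_grad : ∫⁻ x, ‖fderiv ℝ u x‖ₑ ^ finrank ℝ E ∂μ ≤ 1)
    {a : ℝ} (ha₀ : 0 < a) (ha₁ : a ≤ 1) :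
    μ {x | 1 + (μ.toSphere univ * ENNReal.ofReal (-log a) + μ (support (fderiv ℝ u))) ^ (1 / q)
        < μ.toSphere univ * ‖u x‖ₑ} ≤ (μ.toSphere univ * ENNReal.ofReal a) ^ finrank ℝ E := by
  have : Nontrivial E := nontrivial_of_finrank_pos (R := ℝ) (mod_cast hq.pos)
  have h_near : {x | 1 + (μ.toSphere univ * ENNReal.ofReal (-log a) +
        μ (support (fderiv ℝ u))) ^ (1 / q) < μ.toSphere univ * ‖u x‖ₑ} ⊆
      {x | 1 ≤ ∫⁻ z in ball 0 a, ‖fderiv ℝ u (x + z)‖ₑ ∂rieszMeasure μ} := fun x hx ↦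
    (lt_of_add_lt_add_right <| hx.out.trans_le <|
      (toSphere_univ_mul_enorm_le_setLIntegral_ball_add μ hq hu hu_supp x ha₀ ha₁).trans <|
        add_le_add_right (mul_le_of_le_one_left' (ENNReal.rpow_le_one h_grad (by positivity))) _).le
  calc _ ≤ (μ.toSphere univ * ENNReal.ofReal a) ^ (finrank ℝ E : ℝ) *
        ∫⁻ x, ‖fderiv ℝ u x‖ₑ ^ (finrank ℝ E : ℝ) ∂μ :=
        (measure_mono h_near).trans <| measure_one_le_setLIntegral_ball_rieszMeasure_le μ hq.lt.le
          (hu.continuous_fderiv one_ne_zero).enorm.measurable a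
    _ ≤ (μ.toSphere univ * ENNReal.ofReal a) ^ finrank ℝ E := by
        simp_rw [ENNReal.rpow_natCast]
        exact mul_le_of_le_one_right' h_grad

end Riesz

section Level

/-- The height which, for `w` the area of the unit sphere, `V` the volume of the domain and `q` the
conjugate exponent of the dimension `d`, a function `u` with `∫ ‖∇u‖ ^ d ≤ 1` exceeds only on a set
of measure at most `(w * exp (-t)) ^ d`. -/
noncomputable def moserLevel (q w V t : ℝ) : ℝ :=
  (1 + (w * t + V) ^ (1 / q)) / w

variable {q w V : ℝ}

theorem tendsto_moserLevel_atTop (hq : 0 < q) (hw : 0 < w) :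
    Tendsto (moserLevel q w V) atTop atTop :=
  (tendsto_atTop_add_const_left _ _ <| (tendsto_rpow_atTop (one_div_pos.2 hq)).comp <|
    tendsto_atTop_add_const_right _ _ <| tendsto_id.const_mul_atTop hw).atTop_div_const hw

theorem tendsto_moserLevel_add_one_rpow_div (hq : 0 < q) (hw : 0 < w) (hV : 0 ≤ V) :
    Tendsto (fun t ↦ moserLevel q w V (t + 1) ^ q / t) atTop (𝓝 (w ^ (1 - q))) := by
  have h_inv : Tendsto (fun t : ℝ ↦ t⁻¹) atTop (𝓝 0) := tendsto_inv_atTop_zero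
  have h_root : 0 ≤ 1 / q := by positivity
  have h_lin : Tendsto (fun t : ℝ ↦ w + (w + V) * t⁻¹) atTop (𝓝 w) := by
    simpa using (h_inv.const_mul (w + V)).const_add w
  have h_lim : Tendsto (fun t : ℝ ↦ ((t⁻¹ ^ (1 / q) + (w + (w + V) * t⁻¹) ^ (1 / q)) / w) ^ q)
      atTop (𝓝 (((0 ^ (1 / q) + w ^ (1 / q)) / w) ^ q)) :=
    (((h_inv.rpow_const (.inr h_root)).add (h_lin.rpow_const (.inr h_root))).div_const w).rpow_const
      (.inr hq.le)
  have h_val : ((0 ^ (1 / q) + w ^ (1 / q)) / w) ^ q = w ^ (1 - q) := by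
    rw [zero_rpow (by positivity), zero_add, ← rpow_sub_one hw.ne', ← rpow_mul hw.le, sub_mul,
      one_div_mul_cancel hq.ne', one_mul]
  rw [h_val] at h_lim
  refine h_lim.congr' ?_
  filter_upwards [eventually_gt_atTop 0] with t ht
  have h_base : w + (w + V) * t⁻¹ = (w * (t + 1) + V) * t⁻¹ := by field_simp; ring
  rw [h_base, mul_rpow (by positivity) (by positivity), ← one_add_mul, mul_div_right_comm,
    mul_rpow (by positivity) (by positivity), ← rpow_mul (by positivity),
    one_div_mul_cancel hq.ne', rpow_one, ← div_eq_mul_inv, add_comm, moserLevel, add_comm]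

theorem summable_exp_moserLevel_mul_exp_neg {β : ℝ} {n : ℕ} (hq : 0 < q) (hw : 0 < w) (hV : 0 ≤ V)
    (hβ : β < n * w ^ (q - 1)) :
    Summable fun k : ℕ ↦ exp (β * moserLevel q w V (k + 1) ^ q) * (w * exp (-k)) ^ n := by
  have h_slope : β * w ^ (1 - q) < n := by
    rwa [← neg_sub, rpow_neg hw.le, ← div_eq_mul_inv, div_lt_iff₀ (by positivity)]
  obtain ⟨γ, hβγ, hγn⟩ := exists_between h_slope
  have h_geom : Summable fun k : ℕ ↦ w ^ n * exp (γ - n) ^ k :=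
    (summable_geometric_of_lt_one (exp_pos _).le (exp_lt_one_iff.2 (sub_neg.2 hγn))).mul_left _
  have h_event : ∀ᶠ k : ℕ in atTop, β * (moserLevel q w V (k + 1) ^ q / k) < γ :=
    (((tendsto_moserLevel_add_one_rpow_div hq hw hV).comp
      tendsto_natCast_atTop_atTop).const_mul β).eventually_lt_const hβγ
  refine summable_of_isBigO_nat h_geom (.of_bound' ?_)
  filter_upwards [h_event, eventually_gt_atTop 0] with k hk hk₀
  rw [← mul_div_assoc, div_lt_iff₀ (by positivity)] at hk
  rw [norm_of_nonneg (by positivity), norm_of_nonneg (by positivity)]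
  calc exp (β * moserLevel q w V (k + 1) ^ q) * (w * exp (-k)) ^ n
      ≤ exp (γ * k) * (w * exp (-k)) ^ n := by gcongr
    _ = w ^ n * exp (γ - n) ^ k := by
        rw [mul_pow, mul_left_comm, ← exp_nat_mul, ← exp_nat_mul, ← exp_add]
        ring_nf

/-- The constant obtained in the subcritical Moser inequality in dimension `n`: the range of `|u|`
is cut at the levels `moserLevel q w V k`, where `q = n / (n - 1)`, `w` is the area of the unit
sphere and `V` the volume of the domain. -/
noncomputable def moserBound (n : ℕ) (β q w V : ℝ) : ℝ :=
  exp (β * moserLevel q w V 0 ^ q) * V +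
    ∑' k : ℕ, exp (β * moserLevel q w V (k + 1) ^ q) * (w * exp (-k)) ^ n

theorem moserBound_nonneg {n : ℕ} {β : ℝ} (hw : 0 ≤ w) (hV : 0 ≤ V) :
    0 ≤ moserBound n β q w V :=
  add_nonneg (by positivity) (tsum_nonneg fun _ ↦ by positivity)

theorem ofReal_moserBound {n : ℕ} {β : ℝ} (hq : 0 < q) (hw : 0 < w) (hV : 0 ≤ V)
    (hβ : β < n * w ^ (q - 1)) :
    ENNReal.ofReal (moserBound n β q w V) =
      ENNReal.ofReal (exp (β * moserLevel q w V 0 ^ q)) * ENNReal.ofReal V +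
        ∑' k : ℕ, ENNReal.ofReal (exp (β * moserLevel q w V (k + 1) ^ q)) *
          ENNReal.ofReal ((w * exp (-k)) ^ n) := by
  rw [moserBound, ENNReal.ofReal_add (by positivity) (tsum_nonneg fun _ ↦ by positivity),
    ENNReal.ofReal_tsum_of_nonneg (fun _ ↦ by positivity)
      (summable_exp_moserLevel_mul_exp_neg hq hw hV hβ)]
  simp only [ENNReal.ofReal_mul (exp_nonneg _)]

end Level

section Moser

variable {E F : Type*} [NormedAddCommGroup E] [NormedSpace ℝ E] [FiniteDimensional ℝ E]
  [MeasurableSpace E] [BorelSpace E] (μ : Measure E) [μ.IsAddHaarMeasure]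
  [NormedAddCommGroup F] [NormedSpace ℝ F] {u : E → F} {Ω : Set E} {q : ℝ}

theorem measure_moserLevel_lt_norm_le (hq : (finrank ℝ E : ℝ).HolderConjugate q)
    (hΩ : μ Ω ≠ ∞) (hu : ContDiff ℝ 1 u) (hu_supp : HasCompactSupport u) (huΩ : tsupport u ⊆ Ω)
    (h_grad : ∫⁻ x, ‖fderiv ℝ u x‖ₑ ^ finrank ℝ E ∂μ ≤ 1) {t : ℝ} (ht : 0 ≤ t) :
    μ {x | moserLevel q (μ.toSphere.real univ) (μ.real Ω) t < ‖u x‖} ≤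
      ENNReal.ofReal ((μ.toSphere.real univ * exp (-t)) ^ finrank ℝ E) := by
  have : Nontrivial E := nontrivial_of_finrank_pos (R := ℝ) (mod_cast hq.pos)
  set w := μ.toSphere.real univ
  have hw : 0 < w := toSphere_real_univ_pos μ
  have h_sphere : μ.toSphere univ = ENNReal.ofReal w := by rw [ofReal_measureReal]
  have h_supp : μ (support (fderiv ℝ u)) ≤ ENNReal.ofReal (μ.real Ω) := by
    rw [ofReal_measureReal hΩ]
    exact measure_mono ((support_fderiv_subset ℝ).trans huΩ)
  have hq₀ : 0 ≤ 1 / q := by simpa using hq.symm.nonneg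
  rw [ENNReal.ofReal_pow (by positivity), ENNReal.ofReal_mul hw.le, ← h_sphere]
  refine (measure_mono fun x hx ↦ ?_).trans <|
    measure_lt_toSphere_univ_mul_enorm_le μ hq hu hu_supp h_grad (exp_pos (-t)) (by simpa)
  rw [mem_ofPred_eq, moserLevel, div_lt_iff₀' hw] at hx
  calc 1 + (μ.toSphere univ * ENNReal.ofReal (-log (exp (-t))) +
        μ (support (fderiv ℝ u))) ^ (1 / q)
      ≤ 1 + (ENNReal.ofReal w * ENNReal.ofReal t + ENNReal.ofReal (μ.real Ω)) ^ (1 / q) := by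
        rw [log_exp, neg_neg, h_sphere]
        gcongr
    _ = ENNReal.ofReal (1 + (w * t + μ.real Ω) ^ (1 / q)) := by
        rw [← ENNReal.ofReal_mul hw.le, ← ENNReal.ofReal_add (by positivity) (by positivity),
          ENNReal.ofReal_rpow_of_nonneg (by positivity) hq₀,
          ENNReal.ofReal_add zero_le_one (by positivity), ENNReal.ofReal_one]
    _ < ENNReal.ofReal (w * ‖u x‖) :=
        (ENNReal.ofReal_lt_ofReal_iff_of_nonneg (by positivity)).2 hx
    _ = μ.toSphere univ * ‖u x‖ₑ := by rw [ENNReal.ofReal_mul hw.le, h_sphere, ofReal_norm]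

theorem setLIntegral_exp_rpow_norm_le_moserBound (hq : (finrank ℝ E : ℝ).HolderConjugate q)
    (hΩ : μ Ω ≠ ∞) (hu : ContDiff ℝ 1 u) (hu_supp : HasCompactSupport u) (huΩ : tsupport u ⊆ Ω)
    (h_grad : ∫⁻ x, ‖fderiv ℝ u x‖ₑ ^ finrank ℝ E ∂μ ≤ 1) {β : ℝ} (hβ₀ : 0 ≤ β)
    (hβ : β < finrank ℝ E * μ.toSphere.real univ ^ (q - 1)) :
    ∫⁻ x in Ω, ENNReal.ofReal (exp (β * ‖u x‖ ^ q)) ∂μ ≤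
      ENNReal.ofReal (moserBound (finrank ℝ E) β q (μ.toSphere.real univ) (μ.real Ω)) := by
  have : Nontrivial E := nontrivial_of_finrank_pos (R := ℝ) (mod_cast hq.pos)
  set w := μ.toSphere.real univ
  have hw : 0 < w := toSphere_real_univ_pos μ
  have hq₀ : 0 < q := hq.symm.pos
  let level (k : ℕ) : ℝ := moserLevel q w (μ.real Ω) k
  have h_sublevel (k : ℕ) : MeasurableSet {x | ‖u x‖ ≤ level k} :=
    (isClosed_le hu.continuous.norm continuous_const).measurableSet
  have h_exhaust : ⋃ k, {x | ‖u x‖ ≤ level k} = univ := iUnion_eq_univ_iff.2 fun x ↦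
    (((tendsto_moserLevel_atTop hq₀ hw).comp
      tendsto_natCast_atTop_atTop).eventually_ge_atTop ‖u x‖).exists
  have h_exp (k : ℕ) (x : E) (hx : x ∈ {x | ‖u x‖ ≤ level k}) :
      ENNReal.ofReal (exp (β * ‖u x‖ ^ q)) ≤ ENNReal.ofReal (exp (β * level k ^ q)) := by
    gcongr
    exact hx
  refine (lintegral_le_add_tsum_measure_compl (μ.restrict Ω) h_sublevel h_exhaust h_exp).trans ?_
  rw [ofReal_moserBound hq₀ hw measureReal_nonneg hβ, Measure.restrict_apply_univ,
    ofReal_measureReal hΩ]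
  simp only [level, Nat.cast_zero, Nat.cast_add_one, compl_ofPred, not_le]
  gcongr with k
  exact (Measure.restrict_apply_le _ _).trans
    (measure_moserLevel_lt_norm_le μ hq hΩ hu hu_supp huΩ h_grad k.cast_nonneg)

end Moser

theorem weak_moser_inequality_general {E F : Type*} [NormedAddCommGroup E] [NormedSpace ℝ E]
    [FiniteDimensional ℝ E] [MeasurableSpace E] [BorelSpace E] (μ : Measure E)
    [μ.IsAddHaarMeasure] [NormedAddCommGroup F] [NormedSpace ℝ F] (hE : 2 ≤ finrank ℝ E) {β : ℝ}
    (hβ : β < finrank ℝ E * μ.toSphere.real univ ^ (1 / ((finrank ℝ E : ℝ) - 1))) :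
    ∃ C : ℝ → ℝ, ∀ Ω : Set E, μ Ω ≠ ∞ → ∀ u : E → F,
      ContDiff ℝ 1 u → HasCompactSupport u → tsupport u ⊆ Ω →
      ∫ x in Ω, ‖fderiv ℝ u x‖ ^ finrank ℝ E ∂μ ≤ 1 →
      ∫ x in Ω, exp (β * ‖u x‖ ^ ((finrank ℝ E : ℝ) / ((finrank ℝ E : ℝ) - 1))) ∂μ ≤
        C (μ.real Ω) := by
  set q := (finrank ℝ E : ℝ) / ((finrank ℝ E : ℝ) - 1) with hq_def
  have hq : (finrank ℝ E : ℝ).HolderConjugate q := .conjExponent (by exact_mod_cast hE)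
  have : Nontrivial E := nontrivial_of_finrank_pos (R := ℝ) (mod_cast hq.pos)
  have h_exp : 1 / ((finrank ℝ E : ℝ) - 1) = q - 1 := by
    rw [hq_def]
    field_simp [hq.sub_one_ne_zero]
    ring
  rw [h_exp] at hβ
  have h_crit : max β 0 < finrank ℝ E * μ.toSphere.real univ ^ (q - 1) :=
    max_lt hβ (mul_pos hq.pos (rpow_pos_of_pos (toSphere_real_univ_pos μ) _))
  refine ⟨moserBound (finrank ℝ E) (max β 0) q (μ.toSphere.real univ),
    fun Ω hΩ u hu hu_supp huΩ h_grad ↦ ?_⟩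
  have h_grad' := lintegral_enorm_fderiv_pow_le_of_setIntegral_le μ hu hu_supp huΩ (by lia) h_grad
  have h_cont : Continuous fun x ↦ exp (β * ‖u x‖ ^ q) :=
    continuous_exp.comp <|
      continuous_const.mul (hu.continuous.norm.rpow_const fun _ ↦ .inr hq.symm.nonneg)
  rw [integral_eq_lintegral_of_nonneg_ae (ae_of_all _ fun _ ↦ exp_nonneg _)
    h_cont.aestronglyMeasurable]
  refine ENNReal.toReal_le_of_le_ofReal (moserBound_nonneg (by positivity) (by positivity)) ?_
  calc ∫⁻ x in Ω, ENNReal.ofReal (exp (β * ‖u x‖ ^ q)) ∂μ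
      ≤ ∫⁻ x in Ω, ENNReal.ofReal (exp (max β 0 * ‖u x‖ ^ q)) ∂μ := by
        gcongr
        exact le_max_left β 0
    _ ≤ _ := setLIntegral_exp_rpow_norm_le_moserBound μ hq hΩ hu hu_supp huΩ
        (by simpa using h_grad') (le_max_right β 0) h_crit

/-- **Weak Moser inequality** (Li–Zhu, Corollary 1).
Let `n ≥ 2`, and let `ω_{n-1} = n · vol(B₁)` be the surface measure of the unit
sphere in `ℝⁿ`. For any `β < n ω_{n-1}^{1/(n-1)}` there is a constant `C(|Ω|, β)`,
depending only on the Lebesgue measure of the bounded open set `Ω ⊆ ℝⁿ` and on `β`,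
such that every compactly supported `C¹` function `u` on `Ω` with
`∫_Ω |∇u|ⁿ ≤ 1` satisfies `∫_Ω e^{β |u|^{n/(n-1)}} ≤ C(|Ω|, β)`. -/
theorem weak_moser_inequality (n : ℕ) (hn : 2 ≤ n) (β : ℝ)
    (hβ : β < n * ((n : ℝ) *
        (volume (ball (0 : EuclideanSpace ℝ (Fin n)) 1)).toReal) ^
          (1 / ((n : ℝ) - 1))) :
    ∃ C : ℝ → ℝ, ∀ (Ω : Set (EuclideanSpace ℝ (Fin n))),
      IsOpen Ω → Bornology.IsBounded Ω →
      ∀ u : EuclideanSpace ℝ (Fin n) → ℝ,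
        ContDiff ℝ 1 u → HasCompactSupport u → tsupport u ⊆ Ω →
        (∫ x in Ω, ‖fderiv ℝ u x‖ ^ n) ≤ 1 →
        ∫ x in Ω, Real.exp (β * |u x| ^ ((n : ℝ) / ((n : ℝ) - 1))) ≤
          C ((volume Ω).toReal) := by
  obtain ⟨C, hC⟩ := weak_moser_inequality_general (F := ℝ) (β := β)
    (volume : Measure (EuclideanSpace ℝ (Fin n))) (by simpa) (by simpa [Measure.real] using hβ)
  exact ⟨C, fun Ω _ hΩ u ↦ by simpa [Measure.real] using hC Ω hΩ.measure_lt_top.ne u⟩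
end

section
/- Let n > 1 be a real number and a > 0. Define the class D_aⁿ of functions u : [0,∞) → ℝ such that u(0) = 0, u is locally absolutely continuous with ∫₀^∞ |u'(r)|ⁿ dr < ∞, and ∫₀^∞ e^{n(u(r)−r)} dr = a. Then the infimum ξ = inf{∫₀^∞ |u'(r)|ⁿ dr : u ∈ D_aⁿ} is attained: there exists v ∈ D_aⁿ with ∫₀^∞ |v'(r)|ⁿ dr = ξ. -/
open MeasureTheory Real Set

/-- The class `D_aⁿ`: locally absolutely continuous functions `u` on `[0,∞)`
(with a.e. derivative `u'`, so that `u r = ∫₀^r u'`), with `u 0 = 0`,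
`∫₀^∞ |u'|ⁿ < ∞` and `∫₀^∞ e^{n(u-r)} dr = a`. -/
def MemDClass (n a : ℝ) (u u' : ℝ → ℝ) : Prop :=
  (∀ R : ℝ, IntervalIntegrable u' volume 0 R) ∧
  (∀ r ∈ Set.Ici (0 : ℝ), u r = ∫ t in (0 : ℝ)..r, u' t) ∧
  u 0 = 0 ∧
  IntegrableOn (fun r => |u' r| ^ n) (Set.Ioi 0) ∧
  (∫ r in Set.Ioi (0 : ℝ), Real.exp (n * (u r - r))) = a

/-!
The direct method, with the energy replaced by F. Riesz's variation. The supremum of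
`∑ |xᵢ - yᵢ| (|u xᵢ - u yᵢ| / |xᵢ - yᵢ|) ^ p` over finite families of disjoint intervals equals
`∫ |u'| ^ p` (Jensen for one inequality, Fatou applied to difference quotients for the other), but
it is defined for every `u` and is a supremum of pointwise continuous functionals, hence lower
semicontinuous. For `p > 1` a bound on it gives equicontinuity, so its sublevel sets are compact for
locally uniform convergence by Arzelà–Ascoli, and it also gives `u r ≤ r / 2 + K`, so the integrals
of `e ^ (n (u r - r))` are dominated and the constraint is closed. A minimizer exists by
compactness, and finite variation makes it absolutely continuous.
-/

open Filter Topology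
open scoped ENNReal NNReal

section RieszVariation

variable {E : Type*} [PseudoMetricSpace E] {p : ℝ} {u : ℝ → E}

/-- The `p`-energy `∫ ‖v'‖ ^ p` of the affine interpolation `v` of `u` between `x` and `y`; it is
used as the building block of `rieszVariation`. It is `0` for `x = y`, since then `dist x y = 0`. -/
noncomputable def chordEnergy (p : ℝ) (u : ℝ → E) (x y : ℝ) : ℝ≥0∞ :=
  ENNReal.ofReal (dist x y * (dist (u x) (u y) / dist x y) ^ p)

/-- F. Riesz's `p`-variation of a curve: the supremum of the `p`-energies of its piecewise affine
interpolations. For `p > 1` it is the energy `∫ ‖u'‖ ^ p`, in a form that refers only to the values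
of `u`. A finite family of non-overlapping intervals is encoded by the set of their pairs of
endpoints, in either order. -/
noncomputable def rieszVariation (p : ℝ) (u : ℝ → E) : ℝ≥0∞ :=
  ⨆ (P : Finset (ℝ × ℝ)) (_ : (P : Set (ℝ × ℝ)).PairwiseDisjoint fun I ↦ uIoc I.1 I.2),
    ∑ I ∈ P, chordEnergy p u I.1 I.2

theorem chordEnergy_self (x : ℝ) : chordEnergy p u x x = 0 := by
  simp [chordEnergy]

theorem sum_chordEnergy_le_rieszVariation {ι : Type*} {s : Finset ι} {I : ι → ℝ × ℝ}
    (hI : (s : Set ι).PairwiseDisjoint fun i ↦ uIoc (I i).1 (I i).2) :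
    ∑ i ∈ s, chordEnergy p u (I i).1 (I i).2 ≤ rieszVariation p u := by
  classical
  have degenerate : (s : Set ι).Pairwise fun i j ↦ I i = I j →
      chordEnergy p u (I i).1 (I i).2 = 0 := by
    intro i hi j hj hij hIij
    have h_empty : uIoc (I i).1 (I i).2 = ⊥ := by
      simpa only [Function.onFun, ← hIij, disjoint_self] using hI hi hj hij
    have h_eq : (I i).2 = (I i).1 := by
      simpa [uIoc, Ioc_eq_empty_iff] using h_empty
    rw [h_eq, chordEnergy_self]
  have image_disjoint : (s.image I : Set (ℝ × ℝ)).PairwiseDisjoint fun J ↦ uIoc J.1 J.2 := by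
    simp only [Finset.coe_image]
    rintro _ ⟨i, hi, rfl⟩ _ ⟨j, hj, rfl⟩ hij
    exact hI hi hj (ne_of_apply_ne I hij)
  calc ∑ i ∈ s, chordEnergy p u (I i).1 (I i).2
      = ∑ J ∈ s.image I, chordEnergy p u J.1 J.2 :=
        (Finset.sum_image_of_pairwise_eq_zero (f := I)
          (g := fun J ↦ chordEnergy p u J.1 J.2) degenerate).symm
    _ ≤ rieszVariation p u := le_iSup₂_of_le (s.image I) image_disjoint le_rfl

theorem lowerSemicontinuous_rieszVariation (hp : 0 ≤ p) :
    LowerSemicontinuous (rieszVariation p : (ℝ → E) → ℝ≥0∞) := by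
  refine lowerSemicontinuous_biSup fun P _ ↦ Continuous.lowerSemicontinuous ?_
  refine continuous_finsetSum _ fun I _ ↦ ENNReal.continuous_ofReal.comp ?_
  exact continuous_const.mul
    ((((continuous_apply I.1).dist (continuous_apply I.2)).div_const _).rpow_const fun _ ↦ .inr hp)

theorem le_add_rpow_mul_rpow {s t : ℝ} (hp : 1 ≤ p) (hs : 0 < s) (ht : 0 ≤ t) :
    t ≤ s + s ^ (1 - p) * t ^ p := by
  obtain hts | hst := le_or_gt t s
  · exact le_add_of_le_of_nonneg hts (by positivity)
  · have ht' : 0 < t := hs.trans hst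
    calc t = t ^ (1 - p) * t ^ p := by rw [← rpow_add ht']; simp
      _ ≤ s ^ (1 - p) * t ^ p := by
        gcongr ?_ * _
        exact rpow_le_rpow_of_nonpos hs hst.le (by linarith)
      _ ≤ s + s ^ (1 - p) * t ^ p := by linarith

theorem dist_le_add_chordEnergy (hp : 1 ≤ p) {s : ℝ} (hs : 0 < s) (x y : ℝ) :
    dist (u x) (u y) ≤ s * dist x y + s ^ (1 - p) * (chordEnergy p u x y).toReal := by
  obtain rfl | hxy := eq_or_ne x y
  · simp [chordEnergy]
  have hL : 0 < dist x y := dist_pos.2 hxy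
  rw [chordEnergy, ENNReal.toReal_ofReal (by positivity)]
  calc dist (u x) (u y) = dist x y * (dist (u x) (u y) / dist x y) := by field_simp
    _ ≤ dist x y * (s + s ^ (1 - p) * (dist (u x) (u y) / dist x y) ^ p) := by
      gcongr
      exact le_add_rpow_mul_rpow hp hs (by positivity)
    _ = _ := by ring

theorem sum_dist_le_of_rieszVariation_le (hp : 1 ≤ p) {M : ℝ≥0} (hu : rieszVariation p u ≤ M)
    {s : ℝ} (hs : 0 < s) {ι : Type*} {F : Finset ι} {I : ι → ℝ × ℝ}
    (hI : (F : Set ι).PairwiseDisjoint fun i ↦ uIoc (I i).1 (I i).2) :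
    ∑ i ∈ F, dist (u (I i).1) (u (I i).2) ≤
      s * ∑ i ∈ F, dist (I i).1 (I i).2 + s ^ (1 - p) * M := by
  have energy_le : ∑ i ∈ F, (chordEnergy p u (I i).1 (I i).2).toReal ≤ M := by
    have ne_top : ∀ i ∈ F, chordEnergy p u (I i).1 (I i).2 ≠ ⊤ := fun _ _ ↦ ENNReal.ofReal_ne_top
    rw [← ENNReal.toReal_sum ne_top]
    exact ENNReal.toReal_le_coe_of_le_coe ((sum_chordEnergy_le_rieszVariation hI).trans hu)
  calc _ ≤ ∑ i ∈ F, (s * dist (I i).1 (I i).2 +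
        s ^ (1 - p) * (chordEnergy p u (I i).1 (I i).2).toReal) :=
      Finset.sum_le_sum fun i _ ↦ dist_le_add_chordEnergy hp hs _ _
    _ = s * ∑ i ∈ F, dist (I i).1 (I i).2 +
        s ^ (1 - p) * ∑ i ∈ F, (chordEnergy p u (I i).1 (I i).2).toReal := by
      rw [Finset.sum_add_distrib, Finset.mul_sum, Finset.mul_sum]
    _ ≤ _ := by gcongr

theorem dist_le_of_rieszVariation_le (hp : 1 ≤ p) {M : ℝ≥0} (hu : rieszVariation p u ≤ M)
    {s : ℝ} (hs : 0 < s) (x y : ℝ) : dist (u x) (u y) ≤ s * dist x y + s ^ (1 - p) * M := by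
  simpa using sum_dist_le_of_rieszVariation_le hp hu hs (F := {()}) (I := fun _ ↦ (x, y))
    (by simp)

theorem exists_mul_add_rpow_mul_lt (hp : 1 < p) (M : ℝ) {ε : ℝ} (hε : 0 < ε) :
    ∃ s > 0, ∃ δ > 0, ∀ L < δ, s * L + s ^ (1 - p) * M < ε := by
  have h_lim : Tendsto (fun s : ℝ ↦ s ^ (1 - p) * M) atTop (𝓝 0) := by
    simpa using (tendsto_rpow_neg_atTop (sub_pos.2 hp)).mul_const M
  obtain ⟨s, hsε, hs⟩ :=
    ((h_lim.eventually_lt_const (half_pos hε)).and (eventually_gt_atTop 0)).exists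
  refine ⟨s, hs, ε / 2 / s, by positivity, fun L hL ↦ ?_⟩
  have : s * L < ε / 2 := (lt_div_iff₀' hs).1 hL
  linarith

theorem absolutelyContinuousOnInterval_of_rieszVariation_ne_top (hp : 1 < p)
    (hu : rieszVariation p u ≠ ⊤) (a b : ℝ) : AbsolutelyContinuousOnInterval u a b := by
  lift rieszVariation p u to ℝ≥0 using hu with M hM
  rw [absolutelyContinuousOnInterval_iff]
  intro ε hε
  obtain ⟨s, hs, δ, hδ, h_lt⟩ := exists_mul_add_rpow_mul_lt hp M hε
  exact ⟨δ, hδ, fun P hP hL ↦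
    (sum_dist_le_of_rieszVariation_le hp.le hM.ge hs hP.2).trans_lt (h_lt _ hL)⟩

theorem uniformEquicontinuous_of_rieszVariation_le (hp : 1 < p) {M : ℝ≥0} {ι : Type*}
    {u : ι → ℝ → E} (hu : ∀ i, rieszVariation p (u i) ≤ M) : UniformEquicontinuous u := by
  rw [Metric.uniformEquicontinuous_iff]
  intro ε hε
  obtain ⟨s, hs, δ, hδ, h_lt⟩ := exists_mul_add_rpow_mul_lt hp M hε
  exact ⟨δ, hδ, fun x y hxy i ↦
    (dist_le_of_rieszVariation_le hp.le (hu i) hs x y).trans_lt (h_lt _ hxy)⟩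

theorem continuous_of_rieszVariation_ne_top (hp : 1 < p) (hu : rieszVariation p u ≠ ⊤) :
    Continuous u := by
  lift rieszVariation p u to ℝ≥0 using hu with M hM
  exact (uniformEquicontinuous_of_rieszVariation_le hp fun _ : Unit ↦ hM.ge).uniformContinuous ()
    |>.continuous

theorem isCompact_setOf_rieszVariation_le {F : Type*} [MetricSpace F] [ProperSpace F] (hp : 1 < p)
    (M : ℝ≥0) (x₀ : ℝ) (e : F) :
    IsCompact {u : C(ℝ, F) | u x₀ = e ∧ rieszVariation p u ≤ M} := by
  refine ArzelaAscoli.isCompact_of_equicontinuous _ ?_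
    (uniformEquicontinuous_of_rieszVariation_le hp fun u ↦ u.2.2).equicontinuous
  have h_image : ContinuousMap.toFun '' {u : C(ℝ, F) | u x₀ = e ∧ rieszVariation p u ≤ M} =
      {u : ℝ → F | u x₀ = e ∧ rieszVariation p u ≤ M} := by
    ext u
    refine ⟨by rintro ⟨w, hw, rfl⟩; exact hw, fun hu ↦ ⟨⟨u, ?_⟩, hu, rfl⟩⟩
    exact continuous_of_rieszVariation_ne_top hp (ne_top_of_le_ne_top ENNReal.coe_ne_top hu.2)
  rw [h_image]
  refine (isCompact_univ_pi fun x ↦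
    isCompact_closedBall e (1 * dist x x₀ + 1 ^ (1 - p) * M)).of_isClosed_subset ?_ ?_
  · exact (isClosed_eq (continuous_apply x₀) continuous_const).inter
      ((lowerSemicontinuous_rieszVariation (by linarith)).isClosed_preimage M)
  · rintro u ⟨rfl, hu⟩ x -
    exact dist_le_of_rieszVariation_le hp.le hu one_pos x x₀

theorem tsum_chordEnergy_le_rieszVariation {h : ℝ} (hh : 0 ≤ h) (x : ℝ) :
    ∑' k : ℤ, chordEnergy p u (x + k • h) (x + (k + 1) • h) ≤ rieszVariation p u := by
  rw [ENNReal.tsum_eq_iSup_sum]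
  refine iSup_le fun s ↦
    sum_chordEnergy_le_rieszVariation (I := fun k : ℤ ↦ (x + k • h, x + (k + 1) • h)) ?_
  intro i _ j _ hij
  have step_le (k : ℤ) : x + k • h ≤ x + (k + 1) • h := by gcongr; exact Int.le_add_one le_rfl
  simpa only [Function.onFun, uIoc_of_le (step_le _)] using pairwise_disjoint_Ioc_add_zsmul x h hij

theorem lintegral_eq_lintegral_Ioc_tsum_add_zsmul {f : ℝ → ℝ≥0∞} (hf : Measurable f) {h : ℝ}
    (hh : 0 < h) : ∫⁻ x, f x = ∫⁻ x in Ioc 0 h, ∑' k : ℤ, f (x + k • h) := by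
  let e : ℤ ≃ AddSubgroup.zmultiples h :=
    Equiv.ofInjective (fun k : ℤ ↦ k • h) (zsmul_left_strictMono hh).injective
  rw [(isAddFundamentalDomain_Ioc hh 0 volume).lintegral_eq_tsum'' f, zero_add, ← e.tsum_eq,
    lintegral_tsum (f := fun (k : ℤ) x ↦ f (x + k • h))
      fun k ↦ (hf.comp (measurable_add_const _)).aemeasurable]
  have e_apply (k : ℤ) : (e k : ℝ) = k • h := rfl
  simp only [AddSubgroup.vadd_def, vadd_eq_add, e_apply, add_comm]

/- Cutting `ℝ` into the translates of `(0, h]` by `k • h` turns the integral into an average over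
`x ∈ (0, h]` of the energies of `u` along the grids `x + ℤ • h`. -/
theorem lintegral_chordEnergy_div_le_rieszVariation (hu : Continuous u) {h : ℝ} (hh : 0 < h) :
    ∫⁻ x, chordEnergy p u x (x + h) / ENNReal.ofReal h ≤ rieszVariation p u := by
  have h_meas : Measurable fun x ↦ chordEnergy p u x (x + h) := by
    unfold chordEnergy
    fun_prop
  calc ∫⁻ x, chordEnergy p u x (x + h) / ENNReal.ofReal h
      = ∫⁻ x in Ioc 0 h, ∑' k : ℤ, chordEnergy p u (x + k • h) (x + k • h + h) / ENNReal.ofReal h :=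
        lintegral_eq_lintegral_Ioc_tsum_add_zsmul (h_meas.div_const _) hh
    _ ≤ ∫⁻ _ in Ioc 0 h, rieszVariation p u / ENNReal.ofReal h := by
        gcongr with x
        simp only [div_eq_mul_inv, ENNReal.tsum_mul_right]
        gcongr
        simpa only [add_one_zsmul, add_assoc] using tsum_chordEnergy_le_rieszVariation hh.le x
    _ = rieszVariation p u := by
        simp only [lintegral_const, Measure.restrict_apply_univ, volume_Ioc, sub_zero]
        exact ENNReal.div_mul_cancel (by simpa) ENNReal.ofReal_ne_top

end RieszVariation

section Energy

variable {E : Type*} [NormedAddCommGroup E] [NormedSpace ℝ E] {p : ℝ} {u g : ℝ → E}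

theorem ofReal_norm_rpow {F : Type*} [SeminormedAddGroup F] (hp : 0 ≤ p) (e : F) :
    ENNReal.ofReal (‖e‖ ^ p) = ‖e‖ₑ ^ p := by
  rw [← ENNReal.ofReal_rpow_of_nonneg (norm_nonneg e) hp, ofReal_norm]

theorem chordEnergy_le_lintegral {x y : ℝ} (hp : 1 ≤ p) (hg : IntervalIntegrable g volume x y)
    (hu : u y - u x = ∫ t in x..y, g t) :
    chordEnergy p u x y ≤ ∫⁻ t in uIoc x y, ‖g t‖ₑ ^ p := by
  have hp₀ : 0 ≤ p := by linarith
  obtain rfl | hxy := eq_or_ne x y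
  · simp [chordEnergy_self]
  obtain h_top | h_fin := eq_or_ne (∫⁻ t in uIoc x y, ‖g t‖ₑ ^ p) ⊤
  · exact h_top ▸ le_top
  have h_int : IntegrableOn (fun t ↦ ‖g t‖ ^ p) (uIoc x y) := by
    refine ⟨(hg.def'.1.norm.aemeasurable.pow_const p).aestronglyMeasurable, ?_⟩
    rw [hasFiniteIntegral_iff_ofReal (.of_forall fun t ↦ by positivity)]
    simpa only [ofReal_norm_rpow hp₀] using h_fin.lt_top
  have h_length : volume.real (uIoc x y) = dist x y := by
    simp [uIoc, Measure.real, max_sub_min_eq_abs', Real.dist_eq]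
  have hL : 0 < dist x y := dist_pos.2 hxy
  obtain ⟨volume_ne, volume_fin⟩ := ENNReal.toReal_ne_zero.1 (h_length.trans_ne hL.ne')
  have slope_le : dist (u x) (u y) / dist x y ≤ ⨍ t in uIoc x y, ‖g t‖ := by
    rw [setAverage_eq, h_length, smul_eq_mul, div_eq_inv_mul, dist_comm (u x), dist_eq_norm (u y),
      hu]
    gcongr
    exact intervalIntegral.norm_integral_le_integral_norm_uIoc
  have jensen : (⨍ t in uIoc x y, ‖g t‖) ^ p ≤ ⨍ t in uIoc x y, ‖g t‖ ^ p :=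
    (convexOn_rpow hp).map_set_average_le (continuous_rpow_const hp₀).continuousOn isClosed_Ici
      volume_ne volume_fin (.of_forall fun t ↦ norm_nonneg (g t))
      hg.def'.norm h_int
  calc chordEnergy p u x y
      ≤ ENNReal.ofReal (dist x y * ⨍ t in uIoc x y, ‖g t‖ ^ p) := by
        unfold chordEnergy
        gcongr
        exact (rpow_le_rpow (by positivity) slope_le hp₀).trans jensen
    _ = ENNReal.ofReal (∫ t in uIoc x y, ‖g t‖ ^ p) := by
        rw [setAverage_eq, h_length, smul_eq_mul, mul_inv_cancel_left₀ hL.ne']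
    _ = ∫⁻ t in uIoc x y, ‖g t‖ₑ ^ p := by
        rw [ofReal_integral_eq_lintegral_ofReal h_int (.of_forall fun t ↦ by positivity)]
        simp only [ofReal_norm_rpow hp₀]

theorem rieszVariation_le_lintegral (hp : 1 ≤ p) (hg : ∀ x y, IntervalIntegrable g volume x y)
    (hu : ∀ x y, u y - u x = ∫ t in x..y, g t) :
    rieszVariation p u ≤ ∫⁻ t, ‖g t‖ₑ ^ p := by
  refine iSup₂_le fun P hP ↦ ?_
  calc ∑ I ∈ P, chordEnergy p u I.1 I.2
      ≤ ∑ I ∈ P, ∫⁻ t in uIoc I.1 I.2, ‖g t‖ₑ ^ p :=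
        Finset.sum_le_sum fun I _ ↦ chordEnergy_le_lintegral hp (hg _ _) (hu _ _)
    _ = ∫⁻ t in ⋃ I ∈ P, uIoc I.1 I.2, ‖g t‖ₑ ^ p :=
        (lintegral_biUnion_finset hP (fun _ _ ↦ measurableSet_uIoc) _).symm
    _ ≤ ∫⁻ t, ‖g t‖ₑ ^ p := setLIntegral_le_lintegral _ _

theorem lintegral_enorm_deriv_rpow_le_rieszVariation (hp : 0 ≤ p) (hu : Continuous u)
    (hd : ∀ᵐ x, DifferentiableAt ℝ u x) :
    ∫⁻ x, ‖deriv u x‖ₑ ^ p ≤ rieszVariation p u := by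
  have quotient_eq (x : ℝ) {h : ℝ} (hh : 0 < h) :
      chordEnergy p u x (x + h) / ENNReal.ofReal h = ‖h⁻¹ • (u (x + h) - u x)‖ₑ ^ p := by
    rw [chordEnergy, ← ENNReal.ofReal_div_of_pos hh, ← ofReal_norm_rpow hp, norm_smul,
      dist_comm (u x), dist_eq_norm (u _)]
    simp [abs_of_pos hh, hh.ne', div_eq_inv_mul]
  let h : ℕ → ℝ := fun m ↦ 1 / ((m : ℝ) + 1)
  have h_pos (m : ℕ) : 0 < h m := Nat.one_div_pos_of_nat
  have h_lim : Tendsto h atTop (𝓝[>] 0) :=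
    tendsto_nhdsWithin_iff.2 ⟨tendsto_one_div_add_atTop_nhds_zero_nat, .of_forall h_pos⟩
  calc ∫⁻ x, ‖deriv u x‖ₑ ^ p
      = ∫⁻ x, liminf (fun m ↦ ‖(h m)⁻¹ • (u (x + h m) - u x)‖ₑ ^ p) atTop := by
        refine lintegral_congr_ae (hd.mono fun x hx ↦ (Tendsto.liminf_eq ?_).symm)
        exact (hx.hasDerivAt.tendsto_slope_zero_right.comp h_lim).enorm.ennrpow_const p
    _ ≤ liminf (fun m ↦ ∫⁻ x, ‖(h m)⁻¹ • (u (x + h m) - u x)‖ₑ ^ p) atTop := by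
        refine lintegral_liminf_le fun m ↦ Continuous.measurable ?_
        exact ENNReal.continuous_rpow_const.comp (by fun_prop)
    _ ≤ liminf (fun _ : ℕ ↦ rieszVariation p u) atTop :=
        liminf_le_liminf <| .of_forall fun m ↦ by
          simpa only [quotient_eq _ (h_pos m)] using
            lintegral_chordEnergy_div_le_rieszVariation (p := p) hu (h_pos m)
    _ = rieszVariation p u := liminf_const _

theorem exists_continuousMap_eq_integral (hp : 1 ≤ p) (hg : ∀ R, IntervalIntegrable g volume 0 R) :
    ∃ w : C(ℝ, E), (∀ r, 0 ≤ r → w r = ∫ t in (0 : ℝ)..r, g t) ∧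
      rieszVariation p w ≤ ∫⁻ t in Ioi 0, ‖g t‖ₑ ^ p := by
  let g₀ : ℝ → E := (Ioi 0).indicator g
  have hg₀ (x y : ℝ) : IntervalIntegrable g₀ volume x y := by
    have h := (hg x).symm.trans (hg y)
    exact ⟨h.1.indicator measurableSet_Ioi, h.2.indicator measurableSet_Ioi⟩
  refine ⟨⟨fun x ↦ ∫ t in (0 : ℝ)..x, g₀ t, intervalIntegral.continuous_primitive hg₀ 0⟩,
    fun r hr ↦ ?_, ?_⟩
  · refine intervalIntegral.integral_congr_ae (.of_forall fun t ht ↦ ?_)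
    rw [uIoc_of_le hr] at ht
    exact indicator_of_mem (mem_Ioi.2 ht.1) g
  · refine (rieszVariation_le_lintegral hp hg₀ fun x y ↦
      intervalIntegral.integral_interval_sub_left (hg₀ 0 y) (hg₀ 0 x)).trans_eq ?_
    rw [← lintegral_indicator measurableSet_Ioi]
    congr with t
    by_cases ht : t ∈ Ioi (0 : ℝ)
    · simp [g₀, ht]
    · simp [g₀, ht, zero_lt_one.trans_le hp]

theorem ae_differentiableAt_of_absolutelyContinuousOnInterval {u : ℝ → ℝ}
    (hu : ∀ a b, AbsolutelyContinuousOnInterval u a b) : ∀ᵐ x, DifferentiableAt ℝ u x := by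
  have on_interval : ∀ᵐ x : ℝ, ∀ N : ℕ, x ∈ uIcc (-(N : ℝ)) N → DifferentiableAt ℝ u x :=
    ae_all_iff.2 fun N ↦ (hu _ _).ae_differentiableAt
  filter_upwards [on_interval] with x hx
  obtain ⟨N, hN⟩ := exists_nat_ge |x|
  refine hx N ?_
  rw [uIcc_of_le (by linarith [abs_nonneg x])]
  exact abs_le.1 hN

end Energy

section ExpMass

variable {p c : ℝ}

/-- The integral constrained in the class `D_aⁿ`, with `c` in the role of `n`. The value is `0` if
the integrand is not integrable, which cannot happen on the sublevel sets of `rieszVariation`. -/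
noncomputable def expMass (c : ℝ) (w : ℝ → ℝ) : ℝ :=
  ∫ r in Ioi 0, exp (c * (w r - r))

/-- The curves over which `rieszVariation` is minimized. They live on the whole line, where a member
of `D_aⁿ` is extended by `0`, and need not have finite energy. -/
def admissible (c a : ℝ) : Set C(ℝ, ℝ) :=
  {w | w 0 = 0 ∧ expMass c w = a}

theorem expMass_congr {v w : ℝ → ℝ} (h : ∀ r, 0 ≤ r → v r = w r) : expMass c v = expMass c w :=
  setIntegral_congr_fun measurableSet_Ioi fun r hr ↦ by simp only [h r (mem_Ioi.1 hr).le]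

theorem continuousOn_expMass (hp : 1 ≤ p) (hc : 0 < c) (M : ℝ≥0) :
    ContinuousOn (fun w : C(ℝ, ℝ) ↦ expMass c w) {w | w 0 = 0 ∧ rieszVariation p w ≤ M} := by
  set K : ℝ := (1 / 2 : ℝ) ^ (1 - p) * M
  have exponent_le {w : C(ℝ, ℝ)} (hw : w 0 = 0 ∧ rieszVariation p w ≤ M) {r : ℝ} (hr : 0 < r) :
      c * (w r - r) ≤ c * K + -(c / 2) * r := by
    have growth : w r ≤ 1 / 2 * r + K := by
      have := dist_le_of_rieszVariation_le hp hw.2 one_half_pos r 0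
      simp only [hw.1, dist_zero_right, norm_eq_abs, abs_of_pos hr] at this
      exact (le_abs_self _).trans this
    calc c * (w r - r) ≤ c * (1 / 2 * r + K - r) := by gcongr
      _ = c * K + -(c / 2) * r := by ring
  refine continuousOn_of_dominated (bound := fun r ↦ exp (c * K) * exp (-(c / 2) * r))
    (fun w _ ↦ Continuous.aestronglyMeasurable (by fun_prop)) (fun w hw ↦ ?_)
    ((integrableOn_exp_mul_Ioi (by linarith) 0).const_mul _)
    (.of_forall fun r ↦ Continuous.continuousOn (by fun_prop))
  filter_upwards [ae_restrict_mem measurableSet_Ioi] with r hr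
  rw [norm_eq_abs, abs_exp, ← exp_add]
  exact exp_le_exp.2 (exponent_le hw hr)

theorem expMass_mul_min (hc : 0 < c) (m : ℝ) {T : ℝ} (hT : 0 ≤ T) :
    expMass c (fun r ↦ m * min r T) =
      (∫ r in (0 : ℝ)..T, exp (c * (m - 1) * r)) + exp (c * (m - 1) * T) / c := by
  have on_Ioc : EqOn (fun r ↦ exp (c * (m * min r T - r))) (fun r ↦ exp (c * (m - 1) * r))
      (Ioc 0 T) := fun r hr ↦ by
    simp only [min_eq_left hr.2]
    ring_nf
  have on_Ioi : EqOn (fun r ↦ exp (c * (m * min r T - r)))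
      (fun r ↦ exp (c * m * T) * exp (-c * r)) (Ioi T) := fun r hr ↦ by
    simp only [min_eq_right (mem_Ioi.1 hr).le, ← exp_add]
    ring_nf
  have tail_integrable : IntegrableOn (fun r ↦ exp (c * m * T) * exp (-c * r)) (Ioi T) :=
    (integrableOn_exp_mul_Ioi (by linarith) T).const_mul _
  have head_continuous : Continuous fun r ↦ exp (c * (m * min r T - r)) := by fun_prop
  rw [expMass, ← Ioc_union_Ioi_eq_Ioi hT, setIntegral_union (Ioc_disjoint_Ioi le_rfl)
    measurableSet_Ioi head_continuous.integrableOn_Ioc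
    ((integrableOn_congr_fun on_Ioi measurableSet_Ioi).2 tail_integrable),
    setIntegral_congr_fun measurableSet_Ioc on_Ioc, setIntegral_congr_fun measurableSet_Ioi on_Ioi,
    ← intervalIntegral.integral_of_le hT, integral_const_mul, integral_exp_mul_Ioi (by linarith)]
  congr 1
  rw [neg_div_neg_eq, mul_div_assoc', ← exp_add]
  ring_nf

/- With slope `1` the constraint is `T + 1 / c = a`. For smaller `a` the slope `-s` and the time `T`
at which the integrand has decayed to `1 / s` give the value `2 / (c * (s + 1))`, which runs through
`(0, 1 / c)` as `s` runs through `(1, ∞)`. -/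
theorem exists_expMass_mul_min_eq {a : ℝ} (hc : 0 < c) (ha : 0 < a) :
    ∃ m T : ℝ, 0 ≤ T ∧ expMass c (fun r ↦ m * min r T) = a := by
  obtain h_ge | h_lt := le_or_gt 1 (c * a)
  · have hT : 0 ≤ a - 1 / c := sub_nonneg.2 ((div_le_iff₀' hc).2 h_ge)
    refine ⟨1, a - 1 / c, hT, ?_⟩
    rw [expMass_mul_min hc 1 hT]
    simp
  · obtain ⟨s, hs, rfl⟩ : ∃ s > 1, a = 2 / (c * (s + 1)) := by
      refine ⟨2 / (c * a) - 1, ?_, by field_simp; ring⟩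
      have := (lt_div_iff₀ (mul_pos hc ha)).2 (by linarith : 2 * (c * a) < 2)
      linarith
    have hs₀ : 0 < s := zero_lt_one.trans hs
    have rate_eq : c * (-s - 1) = -(c * (s + 1)) := by ring
    have exp_eq : exp (-(c * (s + 1)) * (log s / (c * (s + 1)))) = s⁻¹ := by
      rw [neg_mul, mul_div_cancel₀ _ (by positivity), exp_neg, exp_log hs₀]
    refine ⟨-s, log s / (c * (s + 1)), div_nonneg (log_nonneg hs.le) (by positivity), ?_⟩
    rw [expMass_mul_min hc _ (div_nonneg (log_nonneg hs.le) (by positivity)), rate_eq, exp_eq,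
      intervalIntegral.integral_comp_mul_left (fun r ↦ exp r) (neg_ne_zero.2 (by positivity)),
      integral_exp, exp_eq, mul_zero, exp_zero, smul_eq_mul]
    field_simp
    ring

theorem exists_mem_admissible_rieszVariation_ne_top (hp : 1 ≤ p) (hc : 0 < c) {a : ℝ}
    (ha : 0 < a) : ∃ w ∈ admissible c a, rieszVariation p w ≠ ⊤ := by
  obtain ⟨m, T, hT, h_mass⟩ := exists_expMass_mul_min_eq hc ha
  have hg (R : ℝ) : IntervalIntegrable ((Iic T).indicator fun _ ↦ m) volume 0 R :=
    ⟨integrableOn_const (by simp) |>.indicator measurableSet_Iic,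
      integrableOn_const (by simp) |>.indicator measurableSet_Iic⟩
  obtain ⟨w, hw, h_var⟩ := exists_continuousMap_eq_integral hp hg
  have hw' (r : ℝ) (hr : 0 ≤ r) : w r = m * min r T := by
    rw [hw r hr, intervalIntegral.integral_of_le hr, setIntegral_indicator measurableSet_Iic,
      Ioc_inter_Iic, setIntegral_const, volume_real_Ioc_of_le (le_min hr hT), sub_zero, smul_eq_mul,
      mul_comm]
  refine ⟨w, ⟨by simp [hw], (expMass_congr hw').trans h_mass⟩, ne_top_of_le_ne_top ?_ h_var⟩
  have h_energy : ∀ t, ‖(Iic T).indicator (fun _ ↦ m) t‖ₑ ^ p =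
      (Iic T).indicator (fun _ ↦ ‖m‖ₑ ^ p) t := fun t ↦ by
    by_cases ht : t ∈ Iic T
    · simp [ht]
    · simp [ht, zero_lt_one.trans_le hp]
  simp_rw [h_energy]
  rw [setLIntegral_indicator measurableSet_Iic, inter_comm, Ioi_inter_Iic, setLIntegral_const]
  exact ENNReal.mul_ne_top (ENNReal.rpow_ne_top_of_nonneg (by linarith) enorm_ne_top) (by simp)

theorem exists_isMinOn_rieszVariation_admissible (hp : 1 < p) (hc : 0 < c) {a : ℝ} (ha : 0 < a) :
    ∃ w ∈ admissible c a, rieszVariation p w ≠ ⊤ ∧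
      IsMinOn (fun u : C(ℝ, ℝ) ↦ rieszVariation p u) (admissible c a) w := by
  obtain ⟨w₀, hw₀, h_fin⟩ := exists_mem_admissible_rieszVariation_ne_top hp.le hc ha
  lift rieszVariation p w₀ to ℝ≥0 using h_fin with M hM
  let S : Set C(ℝ, ℝ) := {w | w 0 = 0 ∧ rieszVariation p w ≤ M}
  have hS : IsCompact S := isCompact_setOf_rieszVariation_le hp M 0 0
  let A : Set C(ℝ, ℝ) := S ∩ (fun w : C(ℝ, ℝ) ↦ expMass c w) ⁻¹' {a}
  have hA : IsCompact A :=
    hS.of_isClosed_subset ((continuousOn_expMass hp.le hc M).preimage_isClosed_of_isClosed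
      hS.isClosed isClosed_singleton) inter_subset_left
  have hA_nonempty : A.Nonempty := ⟨w₀, ⟨hw₀.1, hM.ge⟩, hw₀.2⟩
  have h_lsc : LowerSemicontinuous fun u : C(ℝ, ℝ) ↦ rieszVariation p u :=
    (lowerSemicontinuous_rieszVariation (E := ℝ) (p := p) (by linarith)).comp
      continuous_coeFun
  obtain ⟨w, ⟨⟨hw_zero, hwM⟩, hw_mass⟩, hw_min⟩ :=
    (h_lsc.lowerSemicontinuousOn _).exists_isMinOn hA_nonempty hA
  refine ⟨w, ⟨hw_zero, hw_mass⟩, ne_top_of_le_ne_top ENNReal.coe_ne_top hwM, fun u hu ↦ ?_⟩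
  obtain h_le | h_gt := le_or_gt (rieszVariation p u) M
  · exact hw_min ⟨⟨hu.1, h_le⟩, hu.2⟩
  · exact hwM.trans h_gt.le

end ExpMass

section MemDClass

variable {n a : ℝ}

theorem MemDClass.exists_mem_admissible {u u' : ℝ → ℝ} (hn : 1 ≤ n) (h : MemDClass n a u u') :
    ∃ w ∈ admissible n a,
      rieszVariation n w ≤ ENNReal.ofReal (∫ r in Ioi 0, |u' r| ^ n) := by
  obtain ⟨hu', hu, -, h_energy, h_mass⟩ := h
  obtain ⟨w, hw, h_var⟩ := exists_continuousMap_eq_integral hn hu'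
  have hwu (r : ℝ) (hr : 0 ≤ r) : w r = u r := (hw r hr).trans (hu r hr).symm
  refine ⟨w, ⟨by simp [hw], (expMass_congr hwu).trans h_mass⟩, h_var.trans_eq ?_⟩
  rw [ofReal_integral_eq_lintegral_ofReal h_energy (.of_forall fun r ↦ by positivity)]
  simp only [← norm_eq_abs, ofReal_norm_rpow (zero_le_one.trans hn)]

theorem memDClass_deriv_of_mem_admissible {w : C(ℝ, ℝ)} (hn : 1 < n) (hw : w ∈ admissible n a)
    (h_var : rieszVariation n w ≠ ⊤) :
    MemDClass n a w (deriv w) ∧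
      ENNReal.ofReal (∫ r in Ioi 0, |deriv w r| ^ n) ≤ rieszVariation n w := by
  have h_ac := absolutelyContinuousOnInterval_of_rieszVariation_ne_top hn h_var
  have h_energy : ∫⁻ r, ENNReal.ofReal (|deriv w r| ^ n) ≤ rieszVariation n w := by
    simpa only [← norm_eq_abs, ofReal_norm_rpow (zero_le_one.trans hn.le)] using
      lintegral_enorm_deriv_rpow_le_rieszVariation (zero_le_one.trans hn.le) w.continuous
        (ae_differentiableAt_of_absolutelyContinuousOnInterval h_ac)
  have h_int : Integrable fun r ↦ |deriv w r| ^ n := by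
    refine ⟨((measurable_deriv w).abs.pow_const n).aestronglyMeasurable, ?_⟩
    rw [hasFiniteIntegral_iff_ofReal (.of_forall fun r ↦ by positivity)]
    exact h_energy.trans_lt h_var.lt_top
  refine ⟨⟨fun R ↦ (h_ac 0 R).intervalIntegrable_deriv, fun r _ ↦ ?_, hw.1, h_int.integrableOn,
    hw.2⟩, ?_⟩
  · rw [(h_ac 0 r).integral_deriv_eq_sub, hw.1, sub_zero]
  · rw [ofReal_integral_eq_lintegral_ofReal h_int.integrableOn (.of_forall fun r ↦ by positivity)]
    exact (setLIntegral_le_lintegral _ _).trans h_energy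

end MemDClass

/-- **Existence of a minimizer** (Li–Zhu, Lemma 2).
For real `n > 1` and `a > 0`, the infimum `ξ = inf {∫₀^∞ |u'|ⁿ dr : u ∈ D_aⁿ}`
is attained by some `v ∈ D_aⁿ`. -/
theorem minimizer_exists (n a : ℝ) (hn : 1 < n) (ha : 0 < a) :
    ∃ v v' : ℝ → ℝ, MemDClass n a v v' ∧
      ∀ u u' : ℝ → ℝ, MemDClass n a u u' →
        (∫ r in Set.Ioi (0 : ℝ), |v' r| ^ n) ≤ ∫ r in Set.Ioi (0 : ℝ), |u' r| ^ n := by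
  obtain ⟨w, hw, h_var, h_min⟩ :=
    exists_isMinOn_rieszVariation_admissible hn (zero_lt_one.trans hn) ha
  obtain ⟨hw_mem, hw_energy⟩ := memDClass_deriv_of_mem_admissible hn hw h_var
  refine ⟨w, deriv w, hw_mem, fun u u' hu ↦ ?_⟩
  obtain ⟨f, hf, hf_energy⟩ := hu.exists_mem_admissible hn.le
  refine (ENNReal.ofReal_le_ofReal_iff (integral_nonneg fun r ↦ by positivity)).1 ?_
  calc ENNReal.ofReal (∫ r in Ioi 0, |deriv w r| ^ n)
      ≤ rieszVariation n w := hw_energy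
    _ ≤ rieszVariation n f := h_min hf
    _ ≤ ENNReal.ofReal (∫ r in Ioi 0, |u' r| ^ n) := hf_energy
end

section
/- Let n > 1 be a real number, let λ₀ > 0, and define v(r) = ln((λ₀+1)/(λ₀ + e^{−nr/(n−1)})) for r ∈ [0,∞). Then v(0) = 0, v is nonnegative and increasing, and ∫₀^∞ e^{n(v(r)−r)} dr = (λ₀+1)/(n·λ₀). Equivalently, if a := ∫₀^∞ e^{n(v−r)} dr then λ₀ = 1/(na − 1). -/
open MeasureTheory Real Set

/-!
The profile `v` solves the first-order equation `(n - 1) v' = n - κ eᵛ` with `κ = n λ₀ / (λ₀ + 1)`.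
For any solution of this equation, `e^{(n-1)v - nr}` has derivative `-κ e^{n(v-r)}`, so the
integrand has an explicit primitive, and the integral is `1 / κ` because `v` vanishes at `0` and
stays bounded at infinity.
-/

section ProfileODE

variable {v : ℝ → ℝ} {n κ : ℝ}

theorem hasDerivAt_exp_of_profile_ode {r : ℝ} (hn : n ≠ 1)
    (hv : HasDerivAt v ((n - κ * exp (v r)) / (n - 1)) r) :
    HasDerivAt (fun s => exp ((n - 1) * v s - n * s)) (-κ * exp (n * (v r - r))) r := by
  have hexponent : HasDerivAt (fun s => (n - 1) * v s - n * s) (-κ * exp (v r)) r :=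
    ((hv.const_mul (n - 1)).sub (hasDerivAt_const_mul n)).congr_deriv (by
      rw [mul_div_cancel₀ _ (sub_ne_zero.mpr hn)]
      ring)
  refine hexponent.exp.congr_deriv ?_
  calc exp ((n - 1) * v r - n * r) * (-κ * exp (v r))
      = -κ * exp ((n - 1) * v r - n * r + v r) := by rw [exp_add]; ring
    _ = -κ * exp (n * (v r - r)) := by ring_nf

theorem integral_Ioi_exp_of_profile_ode {a : ℝ} (hn : n ≠ 1) (hκ : κ ≠ 0)
    (hv : ∀ r ∈ Ici a, HasDerivAt v ((n - κ * exp (v r)) / (n - 1)) r)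
    (hlim : Filter.Tendsto (fun r => (n - 1) * v r - n * r) .atTop .atBot) :
    ∫ r in Ioi a, exp (n * (v r - r)) = exp ((n - 1) * v a - n * a) / κ := by
  have hprimitive : ∀ r ∈ Ici a, HasDerivAt (fun s => -κ⁻¹ * exp ((n - 1) * v s - n * s))
      (exp (n * (v r - r))) r := fun r hr =>
    ((hasDerivAt_exp_of_profile_ode hn (hv r hr)).const_mul (-κ⁻¹)).congr_deriv (by field_simp)
  have hzero : Filter.Tendsto (fun s => -κ⁻¹ * exp ((n - 1) * v s - n * s)) .atTop (nhds 0) := by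
    simpa only [mul_zero, Function.comp_def] using (tendsto_exp_atBot.comp hlim).const_mul (-κ⁻¹)
  rw [integral_Ioi_of_hasDerivAt_of_nonneg' hprimitive (fun r _ => (exp_pos _).le) hzero]
  ring

end ProfileODE

/-- The extremal profile `v` of the sharp exponential Hardy-type inequality in dimension `n`,
with `lam` the parameter `λ₀` of the paper; it is defined on all of `ℝ`, although only its
restriction to `[0, ∞)` is of interest. -/
noncomputable def extremalProfile (n lam r : ℝ) : ℝ :=
  log ((lam + 1) / (lam + exp (-n * r / (n - 1))))

section ExtremalProfile

variable {n lam : ℝ}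

theorem exp_extremalProfile (hlam : 0 ≤ lam) (r : ℝ) :
    exp (extremalProfile n lam r) = (lam + 1) / (lam + exp (-n * r / (n - 1))) :=
  exp_log (by positivity)

theorem extremalProfile_zero (n : ℝ) (hlam : lam + 1 ≠ 0) : extremalProfile n lam 0 = 0 := by
  simp [extremalProfile, hlam]

theorem strictMono_extremalProfile (hn : 1 < n) (hlam : 0 ≤ lam) :
    StrictMono (extremalProfile n lam) := by
  intro r s hrs
  have hexponent : -n * s / (n - 1) < -n * r / (n - 1) :=
    div_lt_div_of_pos_right (mul_lt_mul_of_neg_left hrs (by linarith)) (sub_pos.mpr hn)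
  unfold extremalProfile
  gcongr

theorem extremalProfile_nonneg (hn : 1 < n) (hlam : 0 ≤ lam) {r : ℝ} (hr : 0 ≤ r) :
    0 ≤ extremalProfile n lam r := by
  simpa only [extremalProfile_zero n (by positivity : lam + 1 ≠ 0)] using
    (strictMono_extremalProfile hn hlam).monotone hr

theorem hasDerivAt_extremalProfile (n : ℝ) (hlam : 0 ≤ lam) (r : ℝ) :
    HasDerivAt (extremalProfile n lam)
      ((n - n * lam / (lam + 1) * exp (extremalProfile n lam r)) / (n - 1)) r := by
  have hden : HasDerivAt (fun s => lam + exp (-n * s / (n - 1)))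
      (exp (-n * r / (n - 1)) * (-n / (n - 1))) r :=
    ((hasDerivAt_const_mul (-n)).div_const (n - 1)).exp.const_add lam
  have hden_pos : 0 < lam + exp (-n * r / (n - 1)) := by positivity
  have hquot := (hasDerivAt_const r (lam + 1)).div hden hden_pos.ne'
  refine (hquot.log (by simp only [Pi.div_apply]; positivity)).congr_deriv ?_
  rw [exp_extremalProfile hlam]
  simp only [Pi.div_apply]
  field_simp
  ring

theorem tendsto_extremalProfile_atTop (hn : 1 < n) (hlam : 0 < lam) :
    Filter.Tendsto (extremalProfile n lam) .atTop (nhds (log ((lam + 1) / lam))) := by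
  have hrate : -n / (n - 1) < 0 := div_neg_of_neg_of_pos (by linarith) (sub_pos.mpr hn)
  have hexp : Filter.Tendsto (fun r => exp (-n * r / (n - 1))) .atTop (nhds 0) := by
    simpa only [Function.comp_def, id, div_mul_eq_mul_div] using
      tendsto_exp_atBot.comp (Filter.tendsto_id.const_mul_atTop_of_neg hrate)
  have hden : Filter.Tendsto (fun r => lam + exp (-n * r / (n - 1))) .atTop (nhds lam) := by
    simpa only [add_zero] using hexp.const_add lam
  exact (tendsto_const_nhds.div hden hlam.ne').log (by positivity)

theorem integral_exp_extremalProfile (hn : 1 < n) (hlam : 0 < lam) :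
    ∫ r in Ioi 0, exp (n * (extremalProfile n lam r - r)) = (lam + 1) / (n * lam) := by
  have hn₀ : 0 < n := by linarith
  have hlim : Filter.Tendsto (fun r => (n - 1) * extremalProfile n lam r - n * r)
      .atTop .atBot := by
    simpa only [sub_eq_add_neg, neg_mul, id] using
      ((tendsto_extremalProfile_atTop hn hlam).const_mul (n - 1)).add_atBot
        (Filter.tendsto_id.const_mul_atTop_of_neg (neg_lt_zero.mpr hn₀))
  rw [integral_Ioi_exp_of_profile_ode hn.ne' (by positivity : n * lam / (lam + 1) ≠ 0)
    (fun r _ => hasDerivAt_extremalProfile n hlam.le r) hlim,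
    extremalProfile_zero n (by positivity)]
  simp only [mul_zero, sub_zero, exp_zero, one_div_div]

end ExtremalProfile

/-- **Properties of the extremal profile** (Li–Zhu, proof of Theorem 1, (3.3)–(3.4)).
For real `n > 1` and `λ₀ > 0`, the function
`v r = ln ((λ₀+1)/(λ₀ + e^{-nr/(n-1)}))` satisfies `v 0 = 0`, is nonnegative and
increasing on `[0,∞)`, and `∫₀^∞ e^{n(v-r)} dr = (λ₀+1)/(n λ₀)`. -/
theorem extremal_profile_constraint (n lam : ℝ) (hn : 1 < n) (hlam : 0 < lam) :
    (fun r : ℝ => Real.log ((lam + 1) / (lam + Real.exp (-n * r / (n - 1))))) 0 = 0 ∧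
    (∀ r ∈ Set.Ici (0 : ℝ),
      0 ≤ Real.log ((lam + 1) / (lam + Real.exp (-n * r / (n - 1))))) ∧
    StrictMonoOn
      (fun r : ℝ => Real.log ((lam + 1) / (lam + Real.exp (-n * r / (n - 1)))))
      (Set.Ici 0) ∧
    (∫ r in Set.Ioi (0 : ℝ),
        Real.exp (n * (Real.log ((lam + 1) / (lam + Real.exp (-n * r / (n - 1)))) - r)))
      = (lam + 1) / (n * lam) := by
  exact ⟨extremalProfile_zero n (by positivity),
    fun _ hr => extremalProfile_nonneg hn hlam.le hr,
    (strictMono_extremalProfile hn hlam.le).strictMonoOn _,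
    integral_exp_extremalProfile hn hlam⟩
end

section
/- Let α > 1/2 and let v : [0,∞) → ℝ be locally absolutely continuous with v(0) = 0, ∫₀^∞ |v'(r)|² dr < ∞, and ∫₀^∞ e^{2(v(r)−r)} dr = α. Then ∫₀^∞ |v'(r)|² dr ≥ 2·( ln(2α) + 1/(2α) − 1 ). -/
open MeasureTheory Real Set

/-!
The bound is a calibration argument. Put `m r = ∫_r^∞ e^{2(v-t)} dt`, let
`g = log (2 m / e^{2(v-r)})` and `V = 2 (g + e^{-g} - 1)`. Since `m' = -e^{2(v-r)}`, the chain rule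
gives `g' = 2 (1 - e^{-g}) - 2 v'`, hence `V' = (2 (1 - e^{-g}) - v')² - v'² ≥ -v'²` and
`V 0 ≤ V R + ∫₀^R v'²`. By the Cauchy–Schwarz inequality the increments of `v` beyond `R` are
controlled by the energy beyond `R`, so `m R / e^{2(v R - R)} → ∫₀^∞ e^{-2s} ds = 1/2` as `R → ∞`,
that is, `V R → 0`. If `v 0 = 0`, then `V 0` is exactly the left-hand side of the inequality.
-/

open Filter Topology

section AbsoluteContinuity

theorem absolutelyContinuousOnInterval_of_dist_le_mul {X Y : Type*} [PseudoMetricSpace X]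
    [PseudoMetricSpace Y] {f : ℝ → X} {g : ℝ → Y} {a b K : ℝ}
    (hf : AbsolutelyContinuousOnInterval f a b)
    (hgf : ∀ x ∈ uIcc a b, ∀ y ∈ uIcc a b, dist (g x) (g y) ≤ K * dist (f x) (f y)) :
    AbsolutelyContinuousOnInterval g a b := by
  have hKf := Tendsto.const_mul K hf
  rw [mul_zero] at hKf
  refine squeeze_zero' (.of_forall fun E => Finset.sum_nonneg fun i _ => dist_nonneg) ?_ hKf
  filter_upwards [mem_inf_of_right (mem_principal_self _)] with E hE
  rw [Finset.mul_sum]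
  exact Finset.sum_le_sum fun i hi => hgf _ (hE.1 i hi).1 _ (hE.1 i hi).2

theorem absolutelyContinuousOnInterval_comp_of_contDiffOn {f φ : ℝ → ℝ} {a b : ℝ}
    (hf : AbsolutelyContinuousOnInterval f a b) (hφ : ContDiffOn ℝ 1 φ (f '' uIcc a b)) :
    AbsolutelyContinuousOnInterval (fun x => φ (f x)) a b := by
  have hconvex : Convex ℝ (f '' uIcc a b) :=
    (isPreconnected_uIcc.image f hf.continuousOn).convex
  obtain ⟨K, hK⟩ := hφ.exists_lipschitzOnWith one_ne_zero hconvex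
    (isCompact_uIcc.image_of_continuousOn hf.continuousOn)
  exact absolutelyContinuousOnInterval_of_dist_le_mul hf fun x hx y hy =>
    hK.dist_le_mul _ (mem_image_of_mem f hx) _ (mem_image_of_mem f hy)

theorem intervalIntegral_le_sub_of_ae_le_deriv {F f : ℝ → ℝ} {a b : ℝ}
    (hF : AbsolutelyContinuousOnInterval F a b) (hab : a ≤ b)
    (hf : IntervalIntegrable f volume a b) (hle : ∀ᵐ x, x ∈ Icc a b → f x ≤ deriv F x) :
    ∫ x in a..b, f x ≤ F b - F a := by
  rw [← hF.integral_deriv_eq_sub]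
  exact intervalIntegral.integral_mono_ae_restrict hab hf hF.intervalIntegrable_deriv
    ((ae_restrict_iff' measurableSet_Icc).2 hle)

/-- `F` is absolutely continuous with a.e. derivative `f` on the interval between `a` and `b`,
encoded by the integral representation `F x = F a + ∫_a^x f`. -/
structure IsPrimitiveOn (F f : ℝ → ℝ) (a b : ℝ) : Prop where
  intervalIntegrable : IntervalIntegrable f volume a b
  eq_add_integral : ∀ x ∈ uIcc a b, F x = F a + ∫ t in a..x, f t

namespace IsPrimitiveOn

variable {F f : ℝ → ℝ} {a b c : ℝ}

theorem integral_eq_sub (hF : IsPrimitiveOn F f a b) : ∫ t in a..b, f t = F b - F a := by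
  rw [hF.eq_add_integral b right_mem_uIcc, add_sub_cancel_left]

theorem mono_left (hF : IsPrimitiveOn F f a b) (hc : c ∈ uIcc a b) : IsPrimitiveOn F f c b := by
  have hac : IntervalIntegrable f volume a c :=
    hF.intervalIntegrable.mono_set (uIcc_subset_uIcc_left hc)
  have hcb : uIcc c b ⊆ uIcc a b := uIcc_subset_uIcc_right hc
  refine ⟨hF.intervalIntegrable.mono_set hcb, fun x hx => ?_⟩
  have hax : IntervalIntegrable f volume a x :=
    hF.intervalIntegrable.mono_set (uIcc_subset_uIcc_left (hcb hx))
  rw [hF.eq_add_integral x (hcb hx), hF.eq_add_integral c hc, add_assoc,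
    intervalIntegral.integral_add_adjacent_intervals hac (hac.symm.trans hax)]

theorem absolutelyContinuousOnInterval (hF : IsPrimitiveOn F f a b) :
    AbsolutelyContinuousOnInterval F a b := by
  refine absolutelyContinuousOnInterval_of_dist_le_mul (K := 1)
    (hF.intervalIntegrable.absolutelyContinuousOnInterval_intervalIntegral left_mem_uIcc)
    fun x hx y hy => ?_
  rw [hF.eq_add_integral x hx, hF.eq_add_integral y hy, dist_add_left, one_mul]

theorem ae_hasDerivAt (hF : IsPrimitiveOn F f a b) (hab : a ≤ b) :
    ∀ᵐ x, x ∈ Icc a b → HasDerivAt F (f x) x := by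
  filter_upwards [hF.intervalIntegrable.ae_hasDerivAt_integral, volume.ae_ne a, volume.ae_ne b]
    with x hderiv hxa hxb hx
  have hnhds : uIcc a b ∈ 𝓝 x := by
    rw [uIcc_of_le hab]
    exact Icc_mem_nhds (hx.1.lt_of_ne hxa.symm) (hx.2.lt_of_ne hxb)
  exact ((hderiv (mem_of_mem_nhds hnhds) a left_mem_uIcc).const_add (F a)).congr_of_eventuallyEq
    (eventually_of_mem hnhds hF.eq_add_integral)

end IsPrimitiveOn

theorem continuousOn_Ici_of_isPrimitiveOn {F f : ℝ → ℝ} {a : ℝ}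
    (hF : ∀ b, a ≤ b → IsPrimitiveOn F f a b) : ContinuousOn F (Ici a) := by
  intro x hx
  have hx' : a ≤ x + 1 := (mem_Ici.1 hx).trans (le_add_of_nonneg_right zero_le_one)
  have hcont := (hF (x + 1) hx').absolutelyContinuousOnInterval.continuousOn
  rw [uIcc_of_le hx'] at hcont
  refine (hcont x ⟨hx, le_add_of_nonneg_right zero_le_one⟩).mono_of_mem_nhdsWithin ?_
  filter_upwards [self_mem_nhdsWithin, mem_nhdsWithin_of_mem_nhds (Iic_mem_nhds (lt_add_one x))]
    with y hay hyx using ⟨hay, hyx⟩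

theorem isPrimitiveOn_integral_Ioi {f : ℝ → ℝ} {a b : ℝ} (hf : IntegrableOn f (Ioi a))
    (hab : a ≤ b) : IsPrimitiveOn (fun x => ∫ t in Ioi x, f t) (fun x => -f x) a b where
  intervalIntegrable :=
    ((intervalIntegrable_iff_integrableOn_Ioc_of_le hab).2 (hf.mono_set Ioc_subset_Ioi_self)).neg
  eq_add_integral x hx := by
    rw [uIcc_of_le hab] at hx
    rw [intervalIntegral.integral_neg, ← intervalIntegral.integral_Ioi_sub_Ioi hf hx.1]
    ring

end AbsoluteContinuity

section CauchySchwarz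

theorem sq_integral_le_measureReal_mul_integral_sq {Ω : Type*} [MeasurableSpace Ω] {μ : Measure Ω}
    [IsFiniteMeasure μ] {f : Ω → ℝ} (hf : Integrable f μ) (hf2 : Integrable (fun x => f x ^ 2) μ) :
    (∫ x, f x ∂μ) ^ 2 ≤ μ.real univ * ∫ x, f x ^ 2 ∂μ := by
  rcases eq_zero_or_neZero μ with rfl | hμ
  · simp
  have hjensen := even_two.convexOn_pow.map_average_le (continuous_pow 2).continuousOn isClosed_univ
    (.of_forall fun x => mem_univ (f x)) hf hf2
  have hpos : 0 < μ.real univ := measureReal_univ_pos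
  rw [average_eq, average_eq, smul_eq_mul, smul_eq_mul] at hjensen
  calc (∫ x, f x ∂μ) ^ 2 = μ.real univ ^ 2 * ((μ.real univ)⁻¹ * ∫ x, f x ∂μ) ^ 2 := by
        field_simp
    _ ≤ μ.real univ ^ 2 * ((μ.real univ)⁻¹ * ∫ x, f x ^ 2 ∂μ) := by gcongr
    _ = μ.real univ * ∫ x, f x ^ 2 ∂μ := by field_simp

theorem IsPrimitiveOn.sq_sub_le {F f : ℝ → ℝ} {a b : ℝ} (hF : IsPrimitiveOn F f a b) (hab : a ≤ b)
    (hf2 : IntegrableOn (fun x => f x ^ 2) (Ioi a)) :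
    (F b - F a) ^ 2 ≤ (b - a) * ∫ x in Ioi a, f x ^ 2 := by
  have hf : IntegrableOn f (Ioc a b) :=
    (intervalIntegrable_iff_integrableOn_Ioc_of_le hab).1 hF.intervalIntegrable
  calc (F b - F a) ^ 2 = (∫ x in Ioc a b, f x) ^ 2 := by
        rw [← hF.integral_eq_sub, intervalIntegral.integral_of_le hab]
    _ ≤ volume.real (Ioc a b) * ∫ x in Ioc a b, f x ^ 2 := by
        simpa only [measureReal_restrict_apply_univ] using
          sq_integral_le_measureReal_mul_integral_sq hf (hf2.mono_set Ioc_subset_Ioi_self)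
    _ ≤ (b - a) * ∫ x in Ioi a, f x ^ 2 := by
        rw [volume_real_Ioc_of_le hab]
        exact mul_le_mul_of_nonneg_left
          (setIntegral_mono_set hf2 (.of_forall fun x => sq_nonneg (f x))
            Ioc_subset_Ioi_self.eventuallyLE) (sub_nonneg.2 hab)

end CauchySchwarz

section Calibration

/-- The mass `m r = ∫_r^∞ e^{2(v(t)-t)} dt` beyond `r`; the constraint prescribes `m 0 = α`. -/
noncomputable def tailMass (v : ℝ → ℝ) (r : ℝ) : ℝ := ∫ t in Ioi r, exp (2 * (v t - t))

/-- The logarithm `g` of the ratio of the tail mass of `v` at `r` to the tail mass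
`e^{2(v(r)-r)} / 2` of the path that stays constant after `r`. -/
noncomputable def logTailRatio (v : ℝ → ℝ) (r : ℝ) : ℝ := log (2 * tailMass v r) - 2 * (v r - r)

/-- The calibration `V = 2 (g + e^{-g} - 1)`: the least energy that `v` can still spend after `r`,
given its value and its tail mass at `r`. -/
noncomputable def calibration (v : ℝ → ℝ) (r : ℝ) : ℝ :=
  2 * (logTailRatio v r + exp (-logTailRatio v r) - 1)

variable {v v' : ℝ → ℝ} {a b r w : ℝ}

theorem tailMass_pos (hexp : IntegrableOn (fun t => exp (2 * (v t - t))) (Ioi r)) :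
    0 < tailMass v r :=
  have : NeZero (volume.restrict (Ioi r)) := ⟨by simp⟩
  integral_exp_pos hexp

theorem exp_neg_logTailRatio (hm : 0 < tailMass v r) :
    exp (-logTailRatio v r) = exp (2 * (v r - r)) / (2 * tailMass v r) := by
  rw [logTailRatio, neg_sub, exp_sub, exp_log (by positivity)]

theorem calibration_zero (hv0 : v 0 = 0) (hm : 0 < tailMass v 0) :
    calibration v 0 = 2 * (log (2 * tailMass v 0) + 1 / (2 * tailMass v 0) - 1) := by
  rw [calibration, exp_neg_logTailRatio hm, logTailRatio, hv0, sub_self, mul_zero, sub_zero,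
    exp_zero]

theorem hasDerivAt_logTailRatio (hm : 0 < tailMass v r)
    (hm' : HasDerivAt (tailMass v) (-exp (2 * (v r - r))) r) (hv : HasDerivAt v w r) :
    HasDerivAt (logTailRatio v) (2 * (1 - exp (-logTailRatio v r)) - 2 * w) r := by
  convert! ((hm'.const_mul 2).log (by positivity)).sub ((hv.sub (hasDerivAt_id r)).const_mul 2)
    using 1
  rw [exp_neg_logTailRatio hm]
  field_simp
  ring

theorem hasDerivAt_calibration (hm : 0 < tailMass v r)
    (hm' : HasDerivAt (tailMass v) (-exp (2 * (v r - r))) r) (hv : HasDerivAt v w r) :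
    HasDerivAt (calibration v) ((2 * (1 - exp (-logTailRatio v r)) - w) ^ 2 - w ^ 2) r := by
  have hg := hasDerivAt_logTailRatio hm hm' hv
  convert! ((hg.add hg.fun_neg.exp).sub_const 1).const_mul 2 using 1
  ring

theorem absolutelyContinuousOnInterval_calibration (hv : AbsolutelyContinuousOnInterval v a b)
    (hm : AbsolutelyContinuousOnInterval (tailMass v) a b)
    (hm0 : ∀ x ∈ uIcc a b, 0 < tailMass v x) :
    AbsolutelyContinuousOnInterval (calibration v) a b := by
  have hlog : AbsolutelyContinuousOnInterval (fun x => log (2 * tailMass v x)) a b := by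
    refine absolutelyContinuousOnInterval_comp_of_contDiffOn (φ := fun y => log (2 * y)) hm
      (ContDiffOn.log (by fun_prop) ?_)
    rintro _ ⟨x, hx, rfl⟩
    exact (mul_pos two_pos (hm0 x hx)).ne'
  have hid : AbsolutelyContinuousOnInterval (fun x : ℝ => x) a b :=
    contDiff_id.contDiffOn.absolutelyContinuousOnInterval
  have hg : AbsolutelyContinuousOnInterval (logTailRatio v) a b :=
    hlog.sub ((hv.sub hid).const_mul 2)
  exact absolutelyContinuousOnInterval_comp_of_contDiffOn
    (φ := fun y => 2 * (y + exp (-y) - 1)) hg (by fun_prop)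

theorem calibration_sub_le_integral_sq (hv : IsPrimitiveOn v v' a b) (hab : a ≤ b)
    (hint : IntervalIntegrable (fun x => v' x ^ 2) volume a b)
    (hexp : IntegrableOn (fun t => exp (2 * (v t - t))) (Ioi a)) :
    calibration v a - calibration v b ≤ ∫ x in a..b, v' x ^ 2 := by
  have hm0 : ∀ x ∈ Icc a b, 0 < tailMass v x := fun x hx =>
    tailMass_pos (hexp.mono_set (Ioi_subset_Ioi hx.1))
  have hm : IsPrimitiveOn (tailMass v) (fun x => -exp (2 * (v x - x))) a b :=
    isPrimitiveOn_integral_Ioi hexp hab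
  have hderiv : ∀ᵐ x, x ∈ Icc a b → -v' x ^ 2 ≤ deriv (calibration v) x := by
    filter_upwards [hv.ae_hasDerivAt hab, hm.ae_hasDerivAt hab] with x hvx hmx hx
    rw [(hasDerivAt_calibration (hm0 x hx) (hmx hx) (hvx hx)).deriv]
    linarith [sq_nonneg (2 * (1 - exp (-logTailRatio v x)) - v' x)]
  have hcal : AbsolutelyContinuousOnInterval (calibration v) a b :=
    absolutelyContinuousOnInterval_calibration hv.absolutelyContinuousOnInterval
      hm.absolutelyContinuousOnInterval (by rwa [uIcc_of_le hab])
  have hftc : ∫ x in a..b, -v' x ^ 2 ≤ calibration v b - calibration v a :=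
    intervalIntegral_le_sub_of_ae_le_deriv hcal hab hint.neg hderiv
  rw [intervalIntegral.integral_neg] at hftc
  linarith

end Calibration

section FiniteEnergy

/-- `v` is locally absolutely continuous on `[0, ∞)` with a.e. derivative `v'`, and its energy
`∫₀^∞ v'²` is finite. -/
structure HasFiniteEnergy (v v' : ℝ → ℝ) : Prop where
  isPrimitiveOn : ∀ R, 0 ≤ R → IsPrimitiveOn v v' 0 R
  integrableOn_sq : IntegrableOn (fun r => v' r ^ 2) (Ioi 0)

theorem tailMass_eq_exp_mul_integral (v : ℝ → ℝ) (r : ℝ) :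
    tailMass v r =
      exp (2 * (v r - r)) * ∫ s in Ioi 0, exp (2 * (v (r + s) - v r) - 2 * s) := by
  have hshift := (measurePreserving_add_left volume r).setIntegral_preimage_emb
    (measurableEmbedding_addLeft r) (fun t => exp (2 * (v t - t))) (Ioi r)
  rw [preimage_const_add_Ioi, sub_self] at hshift
  rw [tailMass, ← hshift, ← integral_const_mul]
  congr with s
  rw [← exp_add]
  ring_nf

namespace HasFiniteEnergy

variable {v v' : ℝ → ℝ} {r s : ℝ}

theorem isPrimitiveOn_of_le (hv : HasFiniteEnergy v v') (hr : 0 ≤ r) (hrs : r ≤ s) :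
    IsPrimitiveOn v v' r s :=
  (hv.isPrimitiveOn s (hr.trans hrs)).mono_left (mem_uIcc_of_le hr hrs)

theorem integrableOn_sq_Ioi (hv : HasFiniteEnergy v v') (hr : 0 ≤ r) :
    IntegrableOn (fun t => v' t ^ 2) (Ioi r) :=
  hv.integrableOn_sq.mono_set (Ioi_subset_Ioi hr)

theorem sq_increment_le (hv : HasFiniteEnergy v v') (hr : 0 ≤ r) (hs : 0 ≤ s) :
    (v (r + s) - v r) ^ 2 ≤ s * ∫ t in Ioi r, v' t ^ 2 := by
  have hrs : r ≤ r + s := le_add_of_nonneg_right hs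
  simpa only [add_sub_cancel_left] using
    (hv.isPrimitiveOn_of_le hr hrs).sq_sub_le hrs (hv.integrableOn_sq_Ioi hr)

theorem two_mul_increment_le (hv : HasFiniteEnergy v v') (hr : 0 ≤ r) (hs : 0 ≤ s) :
    2 * (v (r + s) - v r) ≤ s + ∫ t in Ioi 0, v' t ^ 2 := by
  set T := ∫ t in Ioi 0, v' t ^ 2
  have hT : 0 ≤ T := integral_nonneg fun t => sq_nonneg (v' t)
  have htail : ∫ t in Ioi r, v' t ^ 2 ≤ T :=
    setIntegral_mono_set hv.integrableOn_sq (.of_forall fun t => sq_nonneg (v' t))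
      (Ioi_subset_Ioi hr).eventuallyLE
  refine le_of_sq_le_sq ?_ (add_nonneg hs hT)
  calc (2 * (v (r + s) - v r)) ^ 2 = 4 * (v (r + s) - v r) ^ 2 := by ring
    _ ≤ 4 * (s * T) := by
        gcongr
        exact (hv.sq_increment_le hr hs).trans (by gcongr)
    _ ≤ (s + T) ^ 2 := by linarith [four_mul_le_sq_add s T]

theorem ae_norm_exp_increment_le (hv : HasFiniteEnergy v v') (hr : 0 ≤ r) :
    ∀ᵐ s ∂volume.restrict (Ioi 0), ‖exp (2 * (v (r + s) - v r) - 2 * s)‖ ≤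
      exp (∫ t in Ioi 0, v' t ^ 2) * exp (-s) := by
  refine ae_restrict_of_forall_mem measurableSet_Ioi fun s hs => ?_
  rw [norm_of_nonneg (exp_pos _).le, ← exp_add, exp_le_exp]
  linarith [hv.two_mul_increment_le hr (mem_Ioi.1 hs).le]

theorem aestronglyMeasurable_exp_increment (hv : HasFiniteEnergy v v') (hr : 0 ≤ r) :
    AEStronglyMeasurable (fun s => exp (2 * (v (r + s) - v r) - 2 * s))
      (volume.restrict (Ioi 0)) := by
  have hcont : ContinuousOn (fun s => v (r + s)) (Ioi 0) :=
    (continuousOn_Ici_of_isPrimitiveOn hv.isPrimitiveOn).comp (by fun_prop)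
      fun s hs => add_nonneg hr (mem_Ioi.1 hs).le
  exact (((hcont.sub continuousOn_const).const_mul 2).sub
    (continuousOn_id.const_mul 2)).rexp.aestronglyMeasurable measurableSet_Ioi

theorem integrableOn_exp (hv : HasFiniteEnergy v v') (hr : 0 ≤ r) :
    IntegrableOn (fun t => exp (2 * (v t - t))) (Ioi r) := by
  suffices h : IntegrableOn (fun t => exp (2 * (v t - t))) (Ioi 0) from
    h.mono_set (Ioi_subset_Ioi hr)
  have hincr : IntegrableOn (fun s => exp (2 * (v (0 + s) - v 0) - 2 * s)) (Ioi 0) :=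
    ((integrableOn_exp_neg_Ioi 0).const_mul _).mono'
      (hv.aestronglyMeasurable_exp_increment le_rfl) (hv.ae_norm_exp_increment_le le_rfl)
  refine (hincr.const_mul (exp (2 * v 0))).congr (.of_forall fun s => ?_)
  dsimp only
  rw [← exp_add, zero_add]
  ring_nf

theorem tendsto_increment (hv : HasFiniteEnergy v v') (hs : 0 ≤ s) :
    Tendsto (fun r => v (r + s) - v r) atTop (𝓝 0) := by
  have htail : Tendsto (fun r => s * ∫ t in Ioi r, v' t ^ 2) atTop (𝓝 0) := by
    simpa only [mul_zero, id] using (tendsto_integral_Ioi_zero tendsto_id).const_mul s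
  have hsq : Tendsto (fun r => (v (r + s) - v r) ^ 2) atTop (𝓝 0) :=
    squeeze_zero' (.of_forall fun r => sq_nonneg _)
      ((eventually_ge_atTop 0).mono fun r hr => hv.sq_increment_le hr hs) htail
  rw [tendsto_zero_iff_abs_tendsto_zero]
  simpa only [Function.comp_def, sqrt_sq_eq_abs, sqrt_zero] using hsq.sqrt

theorem tendsto_integral_exp_increment (hv : HasFiniteEnergy v v') :
    Tendsto (fun r => ∫ s in Ioi 0, exp (2 * (v (r + s) - v r) - 2 * s)) atTop (𝓝 (1 / 2)) := by
  have hlim : ∫ s in Ioi (0 : ℝ), exp (-2 * s) = 1 / 2 := by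
    rw [integral_exp_mul_Ioi (by norm_num)]
    norm_num
  rw [← hlim]
  refine tendsto_integral_filter_of_dominated_convergence
    (fun s => exp (∫ t in Ioi 0, v' t ^ 2) * exp (-s)) ?_ ?_
    ((integrableOn_exp_neg_Ioi 0).const_mul _) ?_
  · filter_upwards [eventually_ge_atTop 0] with r hr using hv.aestronglyMeasurable_exp_increment hr
  · filter_upwards [eventually_ge_atTop 0] with r hr using hv.ae_norm_exp_increment_le hr
  · refine ae_restrict_of_forall_mem measurableSet_Ioi fun s hs => ?_
    have hexponent := ((hv.tendsto_increment (mem_Ioi.1 hs).le).const_mul 2).sub_const (2 * s)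
    rw [mul_zero, zero_sub, ← neg_mul] at hexponent
    exact (continuous_exp.tendsto _).comp hexponent

theorem tendsto_logTailRatio (hv : HasFiniteEnergy v v') :
    Tendsto (logTailRatio v) atTop (𝓝 0) := by
  have hlog : Tendsto
      (fun r => log (2 * ∫ s in Ioi 0, exp (2 * (v (r + s) - v r) - 2 * s))) atTop (𝓝 0) := by
    simpa using (hv.tendsto_integral_exp_increment.const_mul 2).log (by norm_num)
  refine hlog.congr' ?_
  filter_upwards [hv.tendsto_integral_exp_increment.eventually_ne one_half_pos.ne'] with r hne
  rw [logTailRatio, tailMass_eq_exp_mul_integral, mul_left_comm,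
    log_mul (exp_ne_zero _) (mul_ne_zero two_ne_zero hne), log_exp, add_sub_cancel_left]

theorem tendsto_calibration (hv : HasFiniteEnergy v v') :
    Tendsto (calibration v) atTop (𝓝 0) := by
  have hφ : Continuous fun y : ℝ => 2 * (y + exp (-y) - 1) := by fun_prop
  simpa using! (hφ.tendsto 0).comp hv.tendsto_logTailRatio

theorem calibration_le_energy (hv : HasFiniteEnergy v v') (hr : 0 ≤ r) :
    calibration v r ≤ ∫ t in Ioi r, v' t ^ 2 := by
  have hsq := hv.integrableOn_sq_Ioi hr
  have hleft : Tendsto (fun R => calibration v r - calibration v R) atTop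
      (𝓝 (calibration v r)) := by
    simpa only [sub_zero] using hv.tendsto_calibration.const_sub (calibration v r)
  refine le_of_tendsto_of_tendsto hleft (intervalIntegral_tendsto_integral_Ioi r hsq tendsto_id) ?_
  filter_upwards [eventually_ge_atTop r] with R hrR
  exact calibration_sub_le_integral_sq (hv.isPrimitiveOn_of_le hr hrR) hrR
    ((intervalIntegrable_iff_integrableOn_Ioc_of_le hrR).2 (hsq.mono_set Ioc_subset_Ioi_self))
    (hv.integrableOn_exp hr)

end HasFiniteEnergy

end FiniteEnergy

theorem sharp_lower_bound_dim_two_general (α : ℝ) (v v' : ℝ → ℝ)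
    (hloc : ∀ R : ℝ, 0 ≤ R → IntervalIntegrable v' volume 0 R)
    (hrep : ∀ r ∈ Ici (0 : ℝ), v r = ∫ t in (0 : ℝ)..r, v' t)
    (hint : IntegrableOn (fun r => |v' r| ^ 2) (Ioi 0))
    (hconstraint : (∫ r in Ioi (0 : ℝ), exp (2 * (v r - r))) = α) :
    2 * (log (2 * α) + 1 / (2 * α) - 1) ≤ ∫ r in Ioi (0 : ℝ), |v' r| ^ 2 := by
  simp only [sq_abs] at hint ⊢
  have hv0 : v 0 = 0 := by rw [hrep 0 self_mem_Ici, intervalIntegral.integral_same]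
  have hv : HasFiniteEnergy v v' := by
    refine ⟨fun R hR => ⟨hloc R hR, fun r hr => ?_⟩, hint⟩
    rw [uIcc_of_le hR] at hr
    rw [hv0, zero_add, hrep r hr.1]
  have hm : tailMass v 0 = α := hconstraint
  rw [← hm, ← calibration_zero hv0 (tailMass_pos (hv.integrableOn_exp le_rfl))]
  exact hv.calibration_le_energy le_rfl

/-- **Sharp lower bound for `n = 2`** (Li–Zhu, inequality (4.1)).
Let `α > 1/2` and let `v` be locally absolutely continuous on `[0,∞)` (with a.e.
derivative `v'`, so that `v r = ∫₀^r v'`), with `v 0 = 0`, `∫₀^∞ |v'|² < ∞` and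
`∫₀^∞ e^{2(v-r)} dr = α`. Then `∫₀^∞ |v'|² dr ≥ 2 (ln (2α) + 1/(2α) - 1)`. -/
theorem sharp_lower_bound_dim_two (α : ℝ) (hα : 1 / 2 < α) (v v' : ℝ → ℝ)
    (hloc : ∀ R : ℝ, IntervalIntegrable v' volume 0 R)
    (hrep : ∀ r ∈ Set.Ici (0 : ℝ), v r = ∫ t in (0 : ℝ)..r, v' t)
    (hv0 : v 0 = 0)
    (hint : IntegrableOn (fun r => |v' r| ^ 2) (Set.Ioi 0))
    (hconstraint : (∫ r in Set.Ioi (0 : ℝ), Real.exp (2 * (v r - r))) = α) :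
    2 * (Real.log (2 * α) + 1 / (2 * α) - 1) ≤
      ∫ r in Set.Ioi (0 : ℝ), |v' r| ^ 2 :=
  sharp_lower_bound_dim_two_general α v v' (fun R _ => hloc R) hrep hint hconstraint
end
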